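/- arXiv:1808.05435 — 3 statements merged into one kernel-verified Lean document; each statement's English description precedes it below -/
import Mathlib

section
/- Let A be a complex semisimple unital Banach algebra such that Soc A is a minimal two-sided ideal and the left annihilator l(Soc A) equals {0}. Then for all a, b ∈ A the following are equivalent: (i) ρ(ax) ≤ ρ(bx) for all x ∈ A; (ii) a = λb for some λ ∈ ℂ with |λ| ≤ 1. -/
open Complex

noncomputable section

/-- The nonzero spectrum `σ'(x) = σ(x) \ {0}` of an element of a complex algebra. -/
def nzSpec {A : Type*} [Ring A] [Algebra ℂ A] (x : A) : Set ℂ :=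
  spectrum ℂ x \ {0}

/-- The spectral rank of an element: `rank a = sup_{x ∈ A} #σ'(xa)`, valued in `ℕ∞`. -/
noncomputable def srank {A : Type*} [Ring A] [Algebra ℂ A] (a : A) : ℕ∞ :=
  ⨆ x : A, (nzSpec (x * a)).encard

/-- The socle of `A`: the set of finite-rank elements. -/
def socle (A : Type*) [Ring A] [Algebra ℂ A] : Set A :=
  {a : A | srank a ≠ ⊤}

/-- `A` is (Jacobson) semisimple: its Jacobson radical is `{0}`. -/
def JacobsonSemisimple (A : Type*) [Ring A] : Prop :=
  TwoSidedIdeal.jacobson (⊥ : TwoSidedIdeal A) = ⊥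

/-- `Soc A` is a minimal two-sided ideal: it is a nonzero two-sided ideal containing
no two-sided ideals other than `{0}` and itself. -/
def SocleIsMinimalTwoSidedIdeal (A : Type*) [Ring A] [Algebra ℂ A] : Prop :=
  ∃ I : TwoSidedIdeal A, (I : Set A) = socle A ∧ I ≠ ⊥ ∧
    ∀ J : TwoSidedIdeal A, J ≤ I → J = ⊥ ∨ J = I

/-- `A` is a prime algebra: all nonzero two-sided ideals `I, J` satisfy `IJ ≠ {0}`. -/
def IsPrimeAlgebra (A : Type*) [Ring A] : Prop :=
  ∀ I J : TwoSidedIdeal A, I ≠ ⊥ → J ≠ ⊥ → ∃ x ∈ I, ∃ y ∈ J, x * y ≠ 0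

/-- The left annihilator of the socle equals `{0}`. -/
def LeftAnnSocleTrivial (A : Type*) [Ring A] [Algebra ℂ A] : Prop :=
  {x : A | ∀ y ∈ socle A, x * y = 0} = {0}

section helpers
set_option linter.unusedSectionVars false
open Filter Topology Polynomial

variable {A : Type*} [NormedRing A] [NormOneClass A] [NormedAlgebra ℂ A] [CompleteSpace A]

/-- Quasinilpotence in terms of norms of powers. -/
def QN (t : A) : Prop := ∀ ε : ℝ, 0 < ε → ∀ᶠ n : ℕ in atTop, ‖t ^ n‖ ≤ ε ^ n

lemma qn_of_spec {t : A} (h : ∀ z ∈ spectrum ℂ t, z = 0) : QN t := by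
  have hr : spectralRadius ℂ t = 0 := by
    rw [spectralRadius]
    simp only [ENNReal.iSup_eq_zero]
    intro z hz
    simp [h z hz]
  intro ε hε
  have h1 := spectrum.pow_norm_pow_one_div_tendsto_nhds_spectralRadius t
  rw [hr] at h1
  have h2 : ∀ᶠ n : ℕ in atTop, ENNReal.ofReal (‖t ^ n‖ ^ (1 / n : ℝ)) < ENNReal.ofReal ε :=
    h1.eventually_lt_const (by simpa using hε)
  filter_upwards [h2, eventually_gt_atTop 0] with n hn hpos
  have h3 := (ENNReal.ofReal_lt_ofReal_iff hε).1 hn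
  have hn0 : n ≠ 0 := hpos.ne'
  have h4 : (‖t ^ n‖ ^ (1 / n : ℝ)) ^ n = ‖t ^ n‖ := by
    rw [one_div]; exact Real.rpow_inv_natCast_pow (norm_nonneg _) hn0
  rw [← h4]
  gcongr

lemma QN.mul {t k : A} (h : QN t) (hc : Commute t k) : QN (t * k) := by
  intro ε hε
  have hk : (0 : ℝ) < ‖k‖ + 1 := by positivity
  filter_upwards [h (ε / (‖k‖ + 1)) (by positivity)] with n hn
  rw [hc.mul_pow]
  calc ‖t ^ n * k ^ n‖ ≤ ‖t ^ n‖ * ‖k ^ n‖ := norm_mul_le _ _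
    _ ≤ (ε / (‖k‖ + 1)) ^ n * (‖k‖ + 1) ^ n := by
        gcongr
        exact (norm_pow_le k n).trans (by gcongr; linarith)
    _ = ε ^ n := by rw [← mul_pow]; congr 1; field_simp

lemma QN.not_mem {t : A} (h : QN t) {z : ℂ} (hz : z ≠ 0) : z ∉ spectrum ℂ t := by
  intro hm
  have hz' : 0 < ‖z‖ := norm_pos_iff.2 hz
  obtain ⟨n, hn, hp⟩ := ((h (‖z‖ / 2) (by positivity)).and (eventually_gt_atTop 0)).exists
  have h1 : ‖z ^ n‖ ≤ ‖t ^ n‖ := spectrum.norm_le_norm_of_mem (spectrum.pow_mem_pow t n hm)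
  rw [norm_pow] at h1
  have : (‖z‖ / 2) ^ n < ‖z‖ ^ n := by
    apply pow_lt_pow_left₀ (by linarith) (by positivity) hp.ne'
  linarith

lemma QN.neg {t : A} (h : QN t) : QN (-t) := by
  have := h.mul (k := -1) (by simp)
  simpa using this

lemma catalan_le (n : ℕ) : (catalan n : ℝ) ≤ 4 ^ n := by
  have h1 := succ_mul_catalan_eq_centralBinom n
  have h2 := Nat.centralBinom_le_four_pow n
  have : catalan n ≤ 4 ^ n := by nlinarith [Nat.zero_le (n * catalan n)]
  exact_mod_cast this

/-- Solve `d = r + d ^ 2` for quasinilpotent `r`. -/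
lemma QN.exists_root {r : A} (h : QN r) :
    ∃ c : A, c = 1 + r * c ^ 2 ∧ ∀ x : A, Commute x r → Commute x c := by
  have hs : Summable (fun n : ℕ => ‖(catalan n : A) * r ^ n‖) := by
    apply summable_of_isBigO_nat (g := fun n : ℕ => ((1 : ℝ) / 2) ^ n)
      (summable_geometric_of_lt_one (by norm_num) (by norm_num))
    apply Asymptotics.IsBigO.of_bound 1
    filter_upwards [h (1 / 8) (by norm_num)] with n hn
    rw [norm_norm, one_mul, Real.norm_of_nonneg (by positivity)]
    calc ‖(catalan n : A) * r ^ n‖ ≤ ‖(catalan n : A)‖ * ‖r ^ n‖ := norm_mul_le _ _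
      _ ≤ 4 ^ n * (1 / 8) ^ n := by
          gcongr
          refine le_trans ?_ (catalan_le n)
          simpa using Nat.norm_cast_le (α := A) (catalan n)
      _ = (1 / 2) ^ n := by rw [← mul_pow]; norm_num
  refine ⟨∑' n : ℕ, (catalan n : A) * r ^ n, ?_, ?_⟩
  · rw [sq, tsum_mul_tsum_eq_tsum_sum_antidiagonal_of_summable_norm hs hs,
      hs.of_norm.tsum_eq_zero_add]
    simp only [catalan_zero, Nat.cast_one, pow_zero, mul_one]
    congr 1
    have hs2 := (summable_norm_sum_mul_antidiagonal_of_summable_norm hs hs).of_norm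
    rw [← hs2.tsum_mul_left]
    congr 1
    ext n
    rw [catalan_succ', Nat.cast_sum, Finset.sum_mul, Finset.mul_sum]
    apply Finset.sum_congr rfl
    rintro ⟨i, j⟩ hij
    rw [Finset.HasAntidiagonal.mem_antidiagonal] at hij
    simp only at hij ⊢
    subst hij
    have e1 : Commute (r ^ i) ((catalan j : ℕ) : A) := (Nat.cast_commute _ _).symm
    have e2 : Commute r (((catalan i * catalan j : ℕ) : A)) := (Nat.cast_commute _ _).symm
    rw [mul_assoc, ← mul_assoc (r ^ i), e1.eq, mul_assoc, ← mul_assoc (catalan i : A), ← pow_add,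
      ← Nat.cast_mul, ← mul_assoc, e2.eq, mul_assoc, ← pow_succ']
  · intro x hx
    have : ∀ n : ℕ, x * ((catalan n : A) * r ^ n) = ((catalan n : A) * r ^ n) * x := fun n =>
      ((Nat.cast_commute (catalan n) x).symm.mul_right (hx.pow_right n)).eq
    rw [commute_iff_eq, ← hs.of_norm.tsum_mul_left, ← hs.of_norm.tsum_mul_right]
    simp only [this]

/-- Lifting idempotents. -/
lemma exists_lift {w : A} (h : ∀ z ∈ spectrum ℂ (w ^ 2 - w), z = 0) :
    ∃ k : A, Commute w k ∧ IsIdempotentElem (w + (w ^ 2 - w) * k) := by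
  set t := w ^ 2 - w with ht
  have hq := qn_of_spec h
  have hu : IsUnit (1 + 4 * t) := by
    have h1 : (-(1/4) : ℂ) ∉ spectrum ℂ t := fun hm => by
      have := h _ hm; norm_num at this
    rw [spectrum.notMem_iff] at h1
    have h2 : IsUnit (algebraMap ℂ A (-4)) := (IsUnit.mk0 (-4 : ℂ) (by norm_num)).map (algebraMap ℂ A)
    have h3 := h2.mul h1
    rw [mul_sub, ← map_mul] at h3
    have e4 : algebraMap ℂ A (-4) = -4 := by
      rw [map_neg]; congr 1; exact map_ofNat _ 4
    rw [e4] at h3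
    convert h3 using 1
    norm_num
  obtain ⟨u, hu⟩ := hu
  set m : A := ((u⁻¹ : Aˣ) : A) with hm
  have hum : (1 + 4 * t) * m = 1 := by rw [← hu]; simp [hm]
  have hwt : Commute w t := by
    rw [ht]; exact ((Commute.refl w).pow_right 2).sub_right (Commute.refl w)
  have hcw : Commute w (1 + 4 * t) :=
    (Commute.one_right w).add_right ((Commute.ofNat_right w 4).mul_right hwt)
  have hwm : Commute w m := by
    rw [← hu] at hcw; exact hcw.units_inv_right
  have htm : Commute t m := by
    rw [ht]; exact ((hwm.pow_left 2)).sub_left hwm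
  obtain ⟨c, hc, hcc⟩ := (hq.mul htm).exists_root
  have hwc : Commute w c := hcc w (hwt.mul_right hwm)
  have hmc : Commute m c := hcc m (htm.symm.mul_right (Commute.refl m))
  refine ⟨-((2 * w - 1) * (m * c)), ?_, ?_⟩
  · exact ((((Commute.ofNat_right w 2).mul_right (Commute.refl w)).sub_right
      (Commute.one_right w)).mul_right (hwm.mul_right hwc)).neg_right
  · -- pass to a commutative subring
    let S : Set A := {w, m, c}
    have hS : ∀ a ∈ S, ∀ b ∈ S, a * b = b * a := by
      rintro a (rfl | rfl | rfl) b (rfl | rfl | rfl) <;>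
      first
      | rfl
      | exact hwm.eq
      | exact hwm.eq.symm
      | exact hwc.eq
      | exact hwc.eq.symm
      | exact hmc.eq
      | exact hmc.eq.symm
    have hcl := Subring.isMulCommutative_closure hS
    let _ : CommRing (Subring.closure S) :=
      { (inferInstance : Ring (Subring.closure S)) with
        mul_comm := fun a b => hcl.is_comm.comm a b }
    let w' : Subring.closure S := ⟨w, Subring.subset_closure (by simp [S])⟩
    let m' : Subring.closure S := ⟨m, Subring.subset_closure (by simp [S])⟩
    let c' : Subring.closure S := ⟨c, Subring.subset_closure (by simp [S])⟩
    have e1 : (1 + 4 * (w' ^ 2 - w')) * m' = 1 := Subtype.ext hum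
    have e2 : c' = 1 + (w' ^ 2 - w') * m' * c' ^ 2 := Subtype.ext hc
    have e3 : (w' + (w' ^ 2 - w') * -((2 * w' - 1) * (m' * c'))) *
        (w' + (w' ^ 2 - w') * -((2 * w' - 1) * (m' * c'))) =
        w' + (w' ^ 2 - w') * -((2 * w' - 1) * (m' * c')) := by
      generalize w' = W at *
      generalize m' = M at *
      generalize c' = C at *
      have e4 : (W ^ 2 - W) * M * C - ((W ^ 2 - W) * M * C) ^ 2 = (W ^ 2 - W) * M := by
        linear_combination (W ^ 2 - W) * M * e2
      linear_combination (-(1 + 4 * (W ^ 2 - W))) * e4 - (W ^ 2 - W) * e1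
    exact congrArg Subtype.val e3

lemma exists_idem_of_nzSpec {v : A} (hfin : (nzSpec v).Finite) (hne : (nzSpec v).Nonempty) :
    ∃ e g g' : A, e ≠ 0 ∧ IsIdempotentElem e ∧ e = v * g ∧ e = g' * v := by
  have : Nontrivial A := NormOneClass.nontrivial
  set q : ℂ[X] := 1 - ∏ μ ∈ hfin.toFinset, (1 - C μ⁻¹ * X) with hq
  have q0 : q.eval 0 = 0 := by simp [hq, eval_prod]
  have q1 : ∀ z ∈ nzSpec v, q.eval z = 1 := by
    intro z hz
    simp only [hq, eval_sub, eval_one, eval_prod, sub_eq_self]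
    apply Finset.prod_eq_zero (i := z) (by simpa using hz)
    have : z ≠ 0 := hz.2
    simp [this]
  obtain ⟨s, hs⟩ : X ∣ q := by rwa [X_dvd_iff, coeff_zero_eq_eval_zero]
  set w := aeval v q with hw
  have hw1 : w = v * aeval v s := by rw [hw, hs]; simp
  have hvs : Commute v (aeval v s) := by
    have : aeval v (X : ℂ[X]) * aeval v s = aeval v s * aeval v (X : ℂ[X]) := by
      rw [← map_mul, ← map_mul, mul_comm]
    rw [commute_iff_eq]
    simpa using this
  have hvw : Commute v w := by rw [hw1]; exact (Commute.refl v).mul_right hvs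
  have hspec : ∀ z ∈ spectrum ℂ (w ^ 2 - w), z = 0 := by
    have : w ^ 2 - w = aeval v (q ^ 2 - q) := by simp [hw]
    rw [this, spectrum.map_polynomial_aeval]
    rintro _ ⟨z, hz, rfl⟩
    by_cases h0 : z = 0
    · subst h0; simp [q0]
    · simp [q1 z ⟨hz, h0⟩]
  obtain ⟨k, hk, hidem⟩ := exists_lift hspec
  have h1 : (1 : ℂ) ∈ spectrum ℂ w := by
    obtain ⟨z, hz⟩ := hne
    rw [hw, spectrum.map_polynomial_aeval]
    exact ⟨z, hz.1, q1 z hz⟩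
  have hsk : w + (w ^ 2 - w) * k = w * (1 + (w - 1) * k) := by noncomm_ring
  have hsk' : w + (w ^ 2 - w) * k = (1 + (w - 1) * k) * w := by
    have : (1 + (w - 1) * k) * w = w + (w - 1) * (k * w) := by noncomm_ring
    rw [this, ← hk.eq]; noncomm_ring
  refine ⟨_, aeval v s * (1 + (w - 1) * k), (1 + (w - 1) * k) * aeval v s, ?_, hidem, ?_, ?_⟩
  · intro h0
    have hwt : Commute (w ^ 2 - w) k := (hk.pow_left 2).sub_left hk
    have hQ := ((qn_of_spec hspec).mul hwt).neg
    rw [← eq_neg_of_add_eq_zero_left h0] at hQ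
    exact hQ.not_mem one_ne_zero h1
  · rw [← mul_assoc, ← hw1, hsk]
  · rw [mul_assoc, ← hvs.eq, ← hw1, hsk']

lemma mem_nzSpec_iff {x : A} {z : ℂ} : z ∈ nzSpec x ↔ z ∈ spectrum ℂ x ∧ z ≠ 0 := Iff.rfl

lemma nzSpec_mul_comm (x y : A) : nzSpec (x * y) = nzSpec (y * x) :=
  spectrum.nonzero_mul_comm x y

lemma spectralRadius_mul_swap (x y : A) :
    spectralRadius ℂ (x * y) = spectralRadius ℂ (y * x) := by
  have key : ∀ x y : A, spectralRadius ℂ (x * y) ≤ spectralRadius ℂ (y * x) := by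
    intro x y
    refine iSup₂_le fun z hz => ?_
    by_cases h0 : z = 0
    · simp [h0]
    · have : z ∈ nzSpec (y * x) := by rw [← nzSpec_mul_comm]; exact ⟨hz, h0⟩
      exact le_iSup₂ (f := fun (k : ℂ) (_ : k ∈ spectrum ℂ (y * x)) => (‖k‖₊ : ENNReal)) z this.1
  exact le_antisymm (key x y) (key y x)

lemma spectralRadius_smul' (c : ℂ) (x : A) :
    spectralRadius ℂ (c • x) = ‖c‖₊ * spectralRadius ℂ x := by
  have key : ∀ (c : ℂ) (x : A), ‖c‖₊ * spectralRadius ℂ x ≤ spectralRadius ℂ (c • x) := by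
    intro c x
    rw [spectralRadius, ENNReal.mul_iSup]
    refine iSup_le fun z => ?_
    rw [ENNReal.mul_iSup]
    refine iSup_le fun hz => ?_
    by_cases h0 : c = 0
    · simp [h0]
    have : c * z ∈ spectrum ℂ (c • x) := by
      have := (spectrum.smul_mem_smul_iff (r := Units.mk0 c h0) (s := z) (a := x)).2 hz
      simpa [Units.smul_def] using this
    calc (‖c‖₊ : ENNReal) * ‖z‖₊ = ‖c * z‖₊ := by simp
      _ ≤ _ := le_iSup₂ (f := fun (k : ℂ) (_ : k ∈ spectrum ℂ (c • x)) => (‖k‖₊ : ENNReal)) _ this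
  refine le_antisymm ?_ (key c x)
  by_cases h0 : c = 0
  · simp [h0]
  have h1 := key c⁻¹ (c • x)
  rw [smul_smul, inv_mul_cancel₀ h0, one_smul] at h1
  have hc : (‖c‖₊ : ENNReal) ≠ 0 := by simpa using h0
  calc spectralRadius ℂ (c • x) = ‖c‖₊ * (‖c⁻¹‖₊ * spectralRadius ℂ (c • x)) := by
        rw [← mul_assoc, ← ENNReal.coe_mul, ← nnnorm_mul, mul_inv_cancel₀ h0]; simp
    _ ≤ _ := by gcongr

lemma one_mem_spec_idem {p : A} (hp : IsIdempotentElem p) (h0 : p ≠ 0) :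
    (1 : ℂ) ∈ spectrum ℂ p := by
  rw [spectrum.mem_iff, map_one]
  intro hu
  apply h0
  have : (1 - p) * p = (1 - p) * 0 := by rw [sub_mul, hp.eq]; simp
  exact hu.mul_left_cancel this

/-- Semisimplicity criterion. -/
lemma eq_zero_of_nzSpec (hss : JacobsonSemisimple A) {u : A} (h : ∀ x, nzSpec (x * u) = ∅) :
    u = 0 := by
  have : u ∈ TwoSidedIdeal.jacobson (⊥ : TwoSidedIdeal A) := by
    rw [TwoSidedIdeal.mem_jacobson_iff]
    intro y
    have h1 : (-1 : ℂ) ∉ spectrum ℂ (y * u) := fun hm => by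
      have : (-1 : ℂ) ∈ nzSpec (y * u) := ⟨hm, by simp⟩
      rw [h] at this; exact this
    rw [spectrum.notMem_iff] at h1
    have h2 : IsUnit (y * u + 1) := by
      have := h1.neg
      simpa using this
    obtain ⟨v, hv⟩ := h2
    refine ⟨((v⁻¹ : Aˣ) : A), ?_⟩
    have : ((v⁻¹ : Aˣ) : A) * y * u + ((v⁻¹ : Aˣ) : A) - 1 = ((v⁻¹ : Aˣ) : A) * (y * u + 1) - 1 := by
      noncomm_ring
    rw [this, ← hv]
    simp
  rw [hss] at this
  simpa [TwoSidedIdeal.mem_bot] using this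

lemma eq_zero_of_sandwich (hss : JacobsonSemisimple A) {u : A} (h : ∀ x, u * x * u = 0) :
    u = 0 := by
  apply eq_zero_of_nzSpec hss
  intro x
  rw [Set.eq_empty_iff_forall_notMem]
  rintro z ⟨hz, h0⟩
  have h1 := spectrum.pow_mem_pow (x * u) 2 hz
  have h2 : (x * u) ^ 2 = 0 := by
    rw [sq, mul_assoc, ← mul_assoc u, h, mul_zero]
  rw [h2] at h1
  have h3 := spectrum.norm_le_norm_of_mem h1
  have : z ≠ 0 := h0
  simp [this] at h3

lemma encard_le_srank (x a : A) : (nzSpec (x * a)).encard ≤ srank a :=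
  le_iSup (fun x : A => (nzSpec (x * a)).encard) x

lemma srank_lt {e p : A} (he : IsIdempotentElem e) (hp : IsIdempotentElem p)
    (hpe : p * e = e) (hep : e * p = e) (hne : e ≠ p) (hfin : srank p ≠ ⊤) :
    srank e < srank p := by
  have he' := he.eq
  have hp' := hp.eq
  have key : ∀ x : A, (nzSpec (x * e)).encard + 1 ≤ srank p := by
    intro x
    have hSf : (nzSpec (x * e)).Finite := by
      rw [← Set.encard_ne_top_iff]
      have h1 := encard_le_srank (x * e) p
      rw [mul_assoc, hep] at h1
      exact ne_top_of_le_ne_top hfin h1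
    have hS : nzSpec (x * e) = nzSpec (e * x * e) := by
      conv_lhs => rw [← he', ← mul_assoc, nzSpec_mul_comm, ← mul_assoc]
    obtain ⟨μ, hμ⟩ := (hSf.insert 0).exists_notMem
    simp only [Set.mem_insert_iff, not_or] at hμ
    obtain ⟨hμ0, hμS⟩ := hμ
    set f := p - e with hf
    have hf0 : f ≠ 0 := fun h => hne (sub_eq_zero.1 h).symm
    have hef : e * f = 0 := by rw [hf, mul_sub, hep, he', sub_self]
    have hfe : f * e = 0 := by rw [hf, sub_mul, hpe, he', sub_self]
    have hff : f * f = f := by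
      conv_lhs => rw [hf, mul_sub, ← hf, hfe, sub_zero, hf, sub_mul, hp', hep]
    have hfp : f * p = f := by rw [hf, sub_mul, hp', hep]
    set y := e * x * e + μ • f with hy
    have hyp : y * p = y := by rw [hy, add_mul, smul_mul_assoc, hfp, mul_assoc, hep]
    have hsub : insert μ (nzSpec (x * e)) ⊆ nzSpec (y * p) := by
      rw [hyp]
      rintro z (rfl | hz)
      · refine ⟨?_, hμ0⟩
        rw [spectrum.mem_iff]
        intro hu
        apply hf0
        apply hu.mul_left_cancel
        rw [mul_zero, sub_mul, hy, add_mul, mul_assoc (e * x), hef, smul_mul_assoc, hff,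
          Algebra.algebraMap_eq_smul_one, smul_mul_assoc]
        simp
      · rw [hS] at hz
        have hz0 : z ≠ 0 := hz.2
        refine ⟨?_, hz0⟩
        have hz1 := hz.1
        rw [spectrum.mem_iff] at hz1 ⊢
        intro hu
        apply hz1
        have e1 : e * x * e * f = 0 := by rw [mul_assoc, hef, mul_zero]
        have e2 : f * (e * x * e) = 0 := by rw [← mul_assoc, ← mul_assoc, hfe, zero_mul, zero_mul]
        have hcom : Commute (algebraMap ℂ A z - e * x * e) (1 - (μ / z) • f) := by
          apply Commute.sub_left
          · exact Algebra.commute_algebraMap_left _ _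
          · apply Commute.sub_right (Commute.one_right _)
            apply Commute.smul_right
            rw [commute_iff_eq, e1, e2]
        have hprod : algebraMap ℂ A z - y =
            (algebraMap ℂ A z - e * x * e) * (1 - (μ / z) • f) := by
          rw [mul_sub, mul_one, mul_smul_comm, sub_mul, e1, sub_zero, hy,
            Algebra.algebraMap_eq_smul_one, smul_mul_assoc, one_mul, smul_smul,
            div_mul_cancel₀ _ hz0]
          abel
        rw [hprod, hcom.isUnit_mul_iff] at hu
        exact hu.1
    calc (nzSpec (x * e)).encard + 1 = (insert μ (nzSpec (x * e))).encard :=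
          (Set.encard_insert_of_notMem hμS).symm
      _ ≤ (nzSpec (y * p)).encard := Set.encard_le_encard hsub
      _ ≤ srank p := encard_le_srank y p
  have h1 : srank e + 1 ≤ srank p := by
    rw [srank, ENat.iSup_add]
    exact iSup_le key
  have h2 : srank e ≠ ⊤ := fun h => hfin (by rw [h] at h1; simpa using h1)
  exact (ENat.add_one_le_iff h2).1 h1

/-- Pointwise proportional linear maps are proportional. -/
lemma uniform_scalar {V W : Type*} [AddCommGroup V] [Module ℂ V] [AddCommGroup W] [Module ℂ W]
    (S T : V →ₗ[ℂ] W) (h : ∀ x, ∃ c : ℂ, S x = c • T x) : ∃ c : ℂ, ∀ x, S x = c • T x := by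
  by_cases hT : ∀ x, T x = 0
  · refine ⟨0, fun x => ?_⟩
    obtain ⟨c, hc⟩ := h x
    rw [hc, hT]; simp
  push Not at hT
  obtain ⟨z, hz⟩ := hT
  obtain ⟨l, hl⟩ := h z
  refine ⟨l, fun x => ?_⟩
  obtain ⟨m, hm⟩ := h x
  obtain ⟨n, hn⟩ := h (x + z)
  rw [map_add, map_add, hl, hm, smul_add] at hn
  have h1 : (m - n) • T x = (n - l) • T z := by
    rw [sub_smul, sub_smul, sub_eq_sub_iff_add_eq_add, hn]; abel
  by_cases hmn : m = n
  · subst hmn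
    rw [sub_self, zero_smul] at h1
    have := (smul_eq_zero.1 h1.symm).resolve_right hz
    rw [hm, sub_eq_zero.1 this]
  · have hmn' : m - n ≠ 0 := sub_ne_zero.2 hmn
    set κ := (m - n)⁻¹ * (n - l)
    have h2 : T x = κ • T z := by
      rw [← smul_smul, ← h1, smul_smul, inv_mul_cancel₀ hmn', one_smul]
    obtain ⟨d, hd⟩ := h (x - κ • z)
    rw [map_sub, map_sub, map_smul, map_smul, h2, sub_self, smul_zero, sub_eq_zero, hl] at hd
    rw [hd, h2, smul_comm]

/-- existence of a minimal idempotent -/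
lemma exists_minimal_idem (hss : JacobsonSemisimple A) {I : TwoSidedIdeal A}
    (hI : (I : Set A) = socle A) (hI0 : I ≠ ⊥) :
    ∃ p ∈ I, p ≠ 0 ∧ IsIdempotentElem p ∧ ∀ x : A, ∃ c : ℂ, p * x * p = c • p := by
  have memI : ∀ x, x ∈ I ↔ srank x ≠ ⊤ := fun x => by
    rw [← SetLike.mem_coe, hI]; rfl
  have hex : ∃ e : A, e ∈ I ∧ e ≠ 0 ∧ IsIdempotentElem e := by
    obtain ⟨u, hu, hu0⟩ : ∃ u ∈ I, u ≠ 0 := by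
      by_contra! hcon
      apply hI0
      rw [eq_bot_iff]
      intro x hx
      simpa [TwoSidedIdeal.mem_bot] using hcon x hx
    obtain ⟨x, hx⟩ : ∃ x, (nzSpec (x * u)).Nonempty := by
      by_contra! hcon
      exact hu0 (eq_zero_of_nzSpec hss hcon)
    have hfin : (nzSpec (x * u)).Finite := by
      rw [← Set.encard_ne_top_iff]
      exact ne_top_of_le_ne_top ((memI u).1 hu) (encard_le_srank x u)
    obtain ⟨e, g, g', he0, he, h1, -⟩ := exists_idem_of_nzSpec hfin hx
    exact ⟨e, by rw [h1]; exact I.mul_mem_right _ _ (I.mul_mem_left _ _ hu), he0, he⟩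
  obtain ⟨p, ⟨hpI, hp0, hp⟩, hmin⟩ :
      ∃ p ∈ {e : A | e ∈ I ∧ e ≠ 0 ∧ IsIdempotentElem e},
        ∀ e ∈ {e : A | e ∈ I ∧ e ≠ 0 ∧ IsIdempotentElem e}, ¬ srank e < srank p :=
    (InvImage.wf (srank (A := A)) wellFounded_lt).has_min _ hex
  have hp' := hp.eq
  refine ⟨p, hpI, hp0, hp, ?_⟩
  have hfin := (memI p).1 hpI
  have claim1 : ∀ y : A, p * y = y → y * p = y → (nzSpec y).Nonempty →
      (∃ l, l * y = p) ∧ ∃ r, y * r = p := by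
    intro y hpy hyp hne
    have hyf : (nzSpec y).Finite := by
      rw [← Set.encard_ne_top_iff]
      have h1 := encard_le_srank y p
      rw [hyp] at h1
      exact ne_top_of_le_ne_top hfin h1
    obtain ⟨e, g, g', he0, he, h1, h2⟩ := exists_idem_of_nzSpec hyf hne
    have hpe : p * e = e := by rw [h1, ← mul_assoc, hpy]
    have hep : e * p = e := by rw [h2, mul_assoc, hyp]
    have heI : e ∈ I := by rw [← hpe]; exact I.mul_mem_right _ _ hpI
    by_cases hep' : e = p
    · exact ⟨⟨g', by rw [← h2, hep']⟩, ⟨g, by rw [← h1, hep']⟩⟩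
    · exact absurd (srank_lt he hp hpe hep hep' hfin) (hmin e ⟨heI, he0, he⟩)
  have claim2 : ∀ y : A, p * y = y → y * p = y → y ≠ 0 →
      (∃ l, l * y = p) ∧ ∃ r, y * r = p := by
    intro y hpy hyp hy0
    obtain ⟨x, hx⟩ : ∃ x, (nzSpec (x * y)).Nonempty := by
      by_contra! hcon
      exact hy0 (eq_zero_of_nzSpec hss hcon)
    have e1 : nzSpec (x * y) = nzSpec (p * x * y) := by
      conv_lhs => rw [← hyp, ← mul_assoc, nzSpec_mul_comm, ← mul_assoc]
    rw [e1] at hx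
    obtain ⟨⟨l, hl⟩, -⟩ := claim1 (p * x * y) (by rw [← mul_assoc, ← mul_assoc, hp'])
      (by rw [mul_assoc, hyp]) hx
    set z := p * (l * (p * x)) * p with hz
    have hzy : z * y = p := by
      rw [hz, mul_assoc _ p y, hpy, mul_assoc, mul_assoc l, hl, hp']
    have hpz : p * z = z := by rw [hz, ← mul_assoc, ← mul_assoc, hp']
    have hzp : z * p = z := by rw [hz, mul_assoc, hp']
    have hf : IsIdempotentElem (y * z) := by
      change y * z * (y * z) = y * z
      rw [mul_assoc, ← mul_assoc z, hzy, hpz]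
    have hf0 : y * z ≠ 0 := by
      intro h0
      apply hp0
      calc p = p * p := hp'.symm
        _ = z * (y * z) * y := by rw [← mul_assoc, hzy, mul_assoc, hzy]
        _ = 0 := by rw [h0]; simp
    obtain ⟨-, r, hr⟩ := claim1 (y * z) (by rw [← mul_assoc, hpy]) (by rw [mul_assoc, hzp])
      ⟨1, one_mem_spec_idem hf hf0, by simp⟩
    exact ⟨⟨z, hzy⟩, ⟨z * r, by rw [← mul_assoc, hr]⟩⟩
  intro x
  set y := p * x * p with hy
  have hpy : p * y = y := by rw [hy, ← mul_assoc, ← mul_assoc, hp']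
  have hyp : y * p = y := by rw [hy, mul_assoc, hp']
  by_cases hy0 : y = 0
  · exact ⟨0, by rw [hy0]; simp⟩
  obtain ⟨⟨l, hl⟩, ⟨r, hr⟩⟩ := claim2 y hpy hyp hy0
  -- `y` has a nonzero spectral value
  obtain ⟨c, hc, hc0⟩ : (nzSpec y).Nonempty := by
    by_contra hcon
    rw [Set.not_nonempty_iff_eq_empty] at hcon
    have hq : QN y := qn_of_spec fun z hz => by
      by_contra h0
      have : z ∈ nzSpec y := ⟨hz, h0⟩
      rw [hcon] at this; exact this
    set g := p * r * p with hg
    have hyg : y * g = p := by rw [hg, ← mul_assoc, ← mul_assoc, hyp, hr, hp']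
    have hlg : p * l * p = g := by
      calc p * l * p = p * l * (y * g) := by rw [hyg]
        _ = p * (l * y) * g := by noncomm_ring
        _ = g := by rw [hl, hp', hg, ← mul_assoc, ← mul_assoc, hp']
    have hgy : g * y = p := by rw [← hlg, mul_assoc, hpy, mul_assoc, hl, hp']
    have hQ := hq.mul (k := g) (by rw [commute_iff_eq, hyg, hgy])
    rw [hyg] at hQ
    exact hQ.not_mem one_ne_zero (one_mem_spec_idem hp hp0)
  refine ⟨c, ?_⟩
  by_contra hne
  have hc0' : c ≠ 0 := hc0
  set d := y - c • p with hd
  have hd0 : d ≠ 0 := sub_ne_zero.2 hne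
  have hpd : p * d = d := by rw [hd, mul_sub, hpy, mul_smul_comm, hp']
  have hdp : d * p = d := by rw [hd, sub_mul, hyp, smul_mul_assoc, hp']
  obtain ⟨⟨l', hl'⟩, ⟨r', hr'⟩⟩ := claim2 d hpd hdp hd0
  rw [spectrum.mem_iff] at hc
  apply hc
  have e0 : algebraMap ℂ A c - y = c • (1 - p) - d := by
    rw [hd, Algebra.algebraMap_eq_smul_one, smul_sub]; abel
  clear_value d
  have h1p : (1 - p) * (1 - p) = 1 - p := by
    have : (1 - p) * (1 - p) = 1 - p - p + p * p := by noncomm_ring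
    rw [this, hp']; abel
  have h1d : (1 - p) * d = 0 := by rw [sub_mul, hpd, one_mul, sub_self]
  have hd1 : d * (1 - p) = 0 := by rw [mul_sub, hdp, mul_one, sub_self]
  have h1pp : (1 - p) * p = 0 := by rw [sub_mul, hp', one_mul, sub_self]
  have hpp1 : p * (1 - p) = 0 := by rw [mul_sub, hp', mul_one, sub_self]
  have hR : (c • (1 - p) - d) * (c⁻¹ • (1 - p) - p * r') = 1 := by
    have h2 : d * (p * r') = p := by rw [← mul_assoc, hdp, hr']
    have h3 : (1 - p) * (p * r') = 0 := by rw [← mul_assoc, h1pp, zero_mul]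
    rw [sub_mul, mul_sub, mul_sub, smul_mul_smul_comm, h1p, smul_mul_assoc, h3, mul_smul_comm, hd1,
      h2, mul_inv_cancel₀ hc0']
    simp
  have hL : (c⁻¹ • (1 - p) - l' * p) * (c • (1 - p) - d) = 1 := by
    have h2 : l' * p * d = p := by rw [mul_assoc, hpd, hl']
    have h3 : l' * p * (1 - p) = 0 := by rw [mul_assoc, hpp1, mul_zero]
    rw [sub_mul, mul_sub, mul_sub, smul_mul_smul_comm, h1p, smul_mul_assoc, h1d, mul_smul_comm, h3,
      h2, inv_mul_cancel₀ hc0']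
    simp
  rw [e0]
  exact isUnit_iff_exists_and_exists.2 ⟨⟨_, hR⟩, ⟨_, hL⟩⟩

end helpers

theorem spectralRadius_domination_of_socle_minimal_of_leftAnn_trivial
    {A : Type*} [NormedRing A] [NormOneClass A] [NormedAlgebra ℂ A] [CompleteSpace A]
    (hss : JacobsonSemisimple A) (hmin : SocleIsMinimalTwoSidedIdeal A)
    (hann : LeftAnnSocleTrivial A) :
    ∀ a b : A,
      ((∀ x : A, spectralRadius ℂ (a * x) ≤ spectralRadius ℂ (b * x)) ↔
        ∃ lam : ℂ, ‖lam‖ ≤ 1 ∧ a = lam • b) := by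

  intro a b
  constructor
  swap
  · rintro ⟨c, hc, rfl⟩ x
    rw [smul_mul_assoc, spectralRadius_smul']
    have : (‖c‖₊ : ENNReal) ≤ 1 := by exact_mod_cast hc
    calc (‖c‖₊ : ENNReal) * spectralRadius ℂ (b * x) ≤ 1 * spectralRadius ℂ (b * x) := by gcongr
      _ = _ := one_mul _
  intro h
  obtain ⟨I, hI, hI0, hImin⟩ := hmin
  obtain ⟨p, hpI, hp0, hp, hpx⟩ := exists_minimal_idem hss hI hI0
  have hp' := hp.eq
  choose τ hτ using hpx
  have smul_inj : ∀ c d : ℂ, c • p = d • p → c = d := fun c d hcd =>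
    smul_left_injective ℂ hp0 hcd
  let T : A →ₗ[ℂ] ℂ :=
    { toFun := τ
      map_add' := fun x y => by
        apply smul_inj
        rw [← hτ, mul_add, add_mul, hτ, hτ, add_smul]
      map_smul' := fun c x => by
        apply smul_inj
        rw [← hτ, mul_smul_comm, smul_mul_assoc, hτ, smul_smul]
        rfl }
  have hrad : ∀ c x z : A, spectralRadius ℂ (c * (x * p * z)) =
      ‖τ (z * c * x)‖₊ * spectralRadius ℂ p := by
    intro c x z
    have e1 : c * (x * p * z) = (c * x * p) * (p * z) := by
      calc c * (x * p * z) = c * (x * (p * p) * z) := by rw [hp']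
        _ = _ := by noncomm_ring
    have e2 : (p * z) * (c * x * p) = p * (z * c * x) * p := by noncomm_ring
    rw [e1, spectralRadius_mul_swap, e2, hτ, spectralRadius_smul']
  have hρ0 : spectralRadius ℂ p ≠ 0 := by
    have h1 : (1 : ENNReal) ≤ spectralRadius ℂ p := by
      have := le_iSup₂ (f := fun (k : ℂ) (_ : k ∈ spectrum ℂ p) => (‖k‖₊ : ENNReal)) 1
        (one_mem_spec_idem hp hp0)
      change _ ≤ spectralRadius ℂ p at this
      simpa using this
    intro h0; rw [h0] at h1; simp at h1
  have hρt : ∀ x : A, spectralRadius ℂ x ≠ ⊤ := fun x =>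
    ne_top_of_le_ne_top ENNReal.coe_ne_top (spectrum.spectralRadius_le_nnnorm x)
  have hle : ∀ z x : A, ‖τ (z * a * x)‖ ≤ ‖τ (z * b * x)‖ := by
    intro z x
    have h1 := h (x * p * z)
    rw [hrad, hrad, ENNReal.mul_le_mul_iff_left hρ0 (hρt p)] at h1
    exact_mod_cast h1
  have step1 : ∀ z : A, ∃ c : ℂ, p * z * a = c • (p * z * b) := by
    intro z
    obtain ⟨c, hc⟩ := uniform_scalar (T ∘ₗ LinearMap.mulLeft ℂ (z * a))
      (T ∘ₗ LinearMap.mulLeft ℂ (z * b)) (by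
        intro x
        change ∃ c : ℂ, τ (z * a * x) = c • τ (z * b * x)
        by_cases h0 : τ (z * b * x) = 0
        · have := hle z x
          rw [h0, norm_zero] at this
          exact ⟨0, by rw [norm_le_zero_iff.1 this]; simp⟩
        · exact ⟨τ (z * a * x) / τ (z * b * x), by rw [smul_eq_mul, div_mul_cancel₀ _ h0]⟩)
    refine ⟨c, ?_⟩
    have hc' : ∀ x, τ (z * a * x) = c * τ (z * b * x) := hc
    rw [← sub_eq_zero]
    apply eq_zero_of_sandwich hss
    intro x
    have e1 : ∀ x, (p * z * a - c • (p * z * b)) * x * p = 0 := by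
      intro x
      have e2 : p * z * a * x * p = τ (z * a * x) • p := by rw [← hτ]; noncomm_ring
      have e3 : p * z * b * x * p = τ (z * b * x) • p := by rw [← hτ]; noncomm_ring
      rw [sub_mul, sub_mul, smul_mul_assoc, smul_mul_assoc, e2, e3, hc', smul_smul, sub_self]
    have e4 : p * z * a - c • (p * z * b) = p * (z * a - c • (z * b)) := by
      rw [mul_sub, mul_smul_comm, mul_assoc, mul_assoc]
    calc (p * z * a - c • (p * z * b)) * x * (p * z * a - c • (p * z * b))
        = (p * z * a - c • (p * z * b)) * x * (p * (z * a - c • (z * b))) := by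
          rw [← e4]
      _ = 0 := by rw [← mul_assoc, e1, zero_mul]
  obtain ⟨lam, hlam⟩ := uniform_scalar
    (LinearMap.mulRight ℂ a ∘ₗ LinearMap.mulLeft ℂ p)
    (LinearMap.mulRight ℂ b ∘ₗ LinearMap.mulLeft ℂ p) step1
  have hlam' : ∀ z, p * z * a = lam • (p * z * b) := hlam
  have hab : a = lam • b := by
    set c := a - lam • b with hc
    have hpc : ∀ z, p * z * c = 0 := by
      intro z
      rw [hc, mul_sub, mul_smul_comm, hlam', sub_self]
    let J : TwoSidedIdeal A := TwoSidedIdeal.mk' {y : A | y ∈ I ∧ ∀ z, y * z * c = 0}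
      ⟨I.zero_mem, fun z => by simp⟩
      (fun {x y} hx hy => ⟨I.add_mem hx.1 hy.1, fun z => by
        rw [add_mul, add_mul, hx.2, hy.2, add_zero]⟩)
      (fun {x} hx => ⟨I.neg_mem hx.1, fun z => by rw [neg_mul, neg_mul, hx.2, neg_zero]⟩)
      (fun {x y} hy => ⟨I.mul_mem_left _ _ hy.1, fun z => by
        rw [mul_assoc x, mul_assoc x, hy.2, mul_zero]⟩)
      (fun {x y} hx => ⟨I.mul_mem_right _ _ hx.1, fun z => by
        rw [mul_assoc x, hx.2]⟩)
    have memJ : ∀ y, y ∈ J ↔ y ∈ I ∧ ∀ z, y * z * c = 0 := fun y =>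
      TwoSidedIdeal.mem_mk' _ _ _ _ _ _ _
    have hJI : J = I := by
      refine (hImin J fun y hy => ((memJ y).1 hy).1).resolve_left fun hJ => hp0 ?_
      have : p ∈ J := (memJ p).2 ⟨hpI, hpc⟩
      rw [hJ] at this
      simpa [TwoSidedIdeal.mem_bot] using this
    have hc0 : c ∈ {x : A | ∀ y ∈ socle A, x * y = 0} := by
      intro y hy
      rw [← hI] at hy
      have hyI : y ∈ I := hy
      rw [← hJI] at hyI
      apply eq_zero_of_sandwich hss
      intro x
      have : c * y * x * (c * y) = c * (y * x * c) * y := by noncomm_ring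
      rw [this, ((memJ y).1 hyI).2]; simp
    rw [hann] at hc0
    exact sub_eq_zero.1 hc0
  by_cases hb : b = 0
  · exact ⟨0, by simp, by rw [hab, hb]; simp⟩
  refine ⟨lam, ?_, hab⟩
  obtain ⟨x, z, hz, hz0⟩ : ∃ x, (nzSpec (x * b)).Nonempty := by
    by_contra! hcon
    exact hb (eq_zero_of_nzSpec hss hcon)
  have hr0 : spectralRadius ℂ (b * x) ≠ 0 := by
    rw [spectralRadius_mul_swap]
    intro h0
    have := le_iSup₂ (f := fun (k : ℂ) (_ : k ∈ spectrum ℂ (x * b)) => (‖k‖₊ : ENNReal)) z hz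
    change _ ≤ spectralRadius ℂ (x * b) at this
    rw [h0] at this
    apply hz0
    simpa using this
  have h1 := h x
  rw [hab, smul_mul_assoc, spectralRadius_smul'] at h1
  have h2 : (‖lam‖₊ : ENNReal) * spectralRadius ℂ (b * x) ≤ 1 * spectralRadius ℂ (b * x) := by
    rwa [one_mul]
  rw [ENNReal.mul_le_mul_iff_left hr0 (hρt _)] at h2
  exact_mod_cast h2
end
end

section
/- Let A be a complex semisimple unital Banach algebra with Soc A ≠ {0}. Then A is prime if and only if Soc A is a minimal two-sided ideal and the left annihilator l(Soc A) equals {0}. -/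
open Complex

noncomputable section

section Helpers

theorem hp_exists_maximal {A : Type*} [Ring A] (hss : JacobsonSemisimple A) {c : A} (hc : c ≠ 0) :
    ∃ M : Ideal A, M.IsMaximal ∧ c ∉ M := by
  by_contra hcon
  push Not at hcon
  apply hc
  have h1 : c ∈ TwoSidedIdeal.jacobson (⊥ : TwoSidedIdeal A) := by
    rw [← TwoSidedIdeal.mem_asIdeal, TwoSidedIdeal.asIdeal_jacobson]
    rw [Ideal.jacobson, Ideal.mem_sInf]
    intro J hJ
    exact hcon J hJ.2
  rw [hss] at h1
  simpa using h1

theorem hp_prime {A : Type*} [Ring A] (hp : IsPrimeAlgebra A) {c d : A} (hc : c ≠ 0) (hd : d ≠ 0) :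
    ∃ z, c * z * d ≠ 0 := by
  by_contra hcon
  push Not at hcon
  let I : TwoSidedIdeal A := TwoSidedIdeal.mk' {x | ∀ z, x * z * d = 0}
    (by simp) (by intro x y hx hy z; simp [add_mul, hx z, hy z])
    (by intro x hx z; simp [hx z])
    (by intro x y hy z; rw [mul_assoc x, mul_assoc x, hy z, mul_zero])
    (by intro x y hx z; rw [mul_assoc x]; exact hx _)
  have hI : ∀ x, x ∈ I ↔ ∀ z, x * z * d = 0 := fun x => by simp [I]
  let J : TwoSidedIdeal A := TwoSidedIdeal.mk' {y | ∀ x ∈ I, ∀ z, x * z * y = 0}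
    (by simp) (by intro x y hx hy w hw z; simp [mul_add, hx w hw z, hy w hw z])
    (by intro x hx w hw z; simp [hx w hw z])
    (by intro x y hy w hw z; rw [← mul_assoc, mul_assoc w]; exact hy w hw _)
    (by intro x y hx w hw z; rw [← mul_assoc, hx w hw z, zero_mul])
  have hJ : ∀ y, y ∈ J ↔ ∀ x ∈ I, ∀ z, x * z * y = 0 := fun x => by simp [J]
  have hcI : c ∈ I := (hI c).2 hcon
  have hdJ : d ∈ J := (hJ d).2 (fun x hx z => (hI x).1 hx z)
  obtain ⟨x, hx, y, hy, hxy⟩ := hp I J (by rintro h; rw [h] at hcI; exact hc (by simpa using hcI))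
    (by rintro h; rw [h] at hdJ; exact hd (by simpa using hdJ))
  exact hxy (by simpa using (hJ y).1 hy x hx 1)

theorem hp_mem_spectrum {A : Type*} [Ring A] [Algebra ℂ A] {M : Ideal A} (hM : M.IsMaximal)
    {b : A} {l : ℂ} (h : algebraMap ℂ A l - b ∈ M) : l ∈ spectrum ℂ b := by
  intro hu
  exact hM.ne_top (M.eq_top_of_isUnit_mem h hu)

/-- the finite set of points `1, …, k` -/
def hpPts (k : ℕ) : Set ℂ := (fun i : ℕ => (i : ℂ) + 1) '' (Set.Iio k)

theorem hp_encard (k : ℕ) : (hpPts k).encard = k := by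
  unfold hpPts
  rw [Function.Injective.encard_image]
  · simp [Set.encard_eq_coe_toFinset_card]
  · intro a b h; simpa using h

theorem hp_srank_top {A : Type*} [Ring A] [Algebra ℂ A] {a : A}
    (h : ∀ k : ℕ, ∃ x : A, hpPts k ⊆ spectrum ℂ (x * a)) : srank a = ⊤ := by
  rw [ENat.eq_top_iff_forall_ge]
  intro k
  obtain ⟨x, hx⟩ := h k
  rw [← hp_encard k]
  refine le_trans (Set.encard_le_encard ?_)
    (le_iSup (fun x : A => (nzSpec (x * a)).encard) x)
  intro z hz
  refine ⟨hx hz, ?_⟩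
  obtain ⟨i, -, rfl⟩ := hz
  simp only [Set.mem_singleton_iff]
  exact_mod_cast Nat.succ_ne_zero i

theorem hp_pts_succ {k : ℕ} {S : Set ℂ} (h : hpPts k ⊆ S) (h1 : (k : ℂ) + 1 ∈ S) :
    hpPts (k + 1) ⊆ S := by
  rintro _ ⟨i, hi, rfl⟩
  rcases Nat.lt_succ_iff_lt_or_eq.1 (Set.mem_Iio.1 hi) with h2 | rfl
  · exact h ⟨i, h2, rfl⟩
  · exact h1

/-- A nonzero finite rank element gives a minimal left ideal `La`. -/
theorem hp_minimal_left {A : Type*} [Ring A] [Algebra ℂ A] (hss : JacobsonSemisimple A) {a : A}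
    (ha : a ≠ 0) (hr : srank a ≠ ⊤) :
    ∃ N : Ideal A, N ≠ ⊥ ∧ ∀ u ∈ N, u ≠ 0 → ∀ v ∈ N, ∃ r, r * u = v := by
  by_contra hcon
  apply hr
  have key : ∀ k : ℕ, ∃ x : A, ∃ L : Ideal A, (∃ w ∈ L, w * a ≠ 0) ∧
      ∀ w ∈ L, hpPts k ⊆ spectrum ℂ ((x + w) * a) := by
    intro k
    induction k with
    | zero => exact ⟨0, ⊤, ⟨1, by simp, by simpa using ha⟩, by simp [hpPts]⟩
    | succ k ih =>
      obtain ⟨x, L, ⟨w0, hw0, hwa⟩, hL⟩ := ih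
      obtain ⟨M, hM, hwM⟩ := hp_exists_maximal hss hwa
      -- for `w ∈ A` with `w a ∉ M`, every element is `r w a` mod `M`
      have gen : ∀ w : A, w * a ∉ M → ∀ c : A, ∃ r : A, c - r * w * a ∈ M := by
        intro w hw c
        have h1 : M ⊔ Ideal.span {w * a} = ⊤ := by
          apply hM.1.2
          refine lt_of_le_of_ne le_sup_left ?_
          intro h
          apply hw
          rw [h]
          exact Submodule.mem_sup_right (Ideal.subset_span rfl)
        have h2 : c ∈ M ⊔ Ideal.span {w * a} := by rw [h1]; trivial
        obtain ⟨m, hm, s, hs, hms⟩ := Submodule.mem_sup.1 h2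
        obtain ⟨r, rfl⟩ := Ideal.mem_span_singleton'.1 hs
        refine ⟨r, ?_⟩
        rw [← hms, mul_assoc]
        simpa using hm
      obtain ⟨r, hr⟩ := gen w0 hwM (algebraMap ℂ A ((k : ℂ) + 1) - x * a)
      by_cases hL' : ∃ w ∈ L, w * a ∈ M ∧ w * a ≠ 0
      · let L' : Ideal A := L ⊓ Submodule.comap (LinearMap.toSpanSingleton A A a) M
        have hLm : ∀ w, w ∈ L' ↔ w ∈ L ∧ w * a ∈ M := fun w => by simp [L']
        refine ⟨x + r * w0, L', ?_, ?_⟩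
        · obtain ⟨w, h1, h2, h3⟩ := hL'
          exact ⟨w, (hLm w).2 ⟨h1, h2⟩, h3⟩
        · intro w hw
          rw [hLm] at hw
          apply hp_pts_succ
          · rw [add_assoc]
            exact hL _ (L.add_mem (L.mul_mem_left _ hw0) hw.1)
          · apply hp_mem_spectrum hM
            have := M.sub_mem hr hw.2
            convert this using 1
            noncomm_ring
      · exfalso
        push Not at hL'
        apply hcon
        refine ⟨Submodule.map (LinearMap.toSpanSingleton A A a) L, ?_, ?_⟩
        · intro h
          apply hwa
          have : w0 * a ∈ Submodule.map (LinearMap.toSpanSingleton A A a) L := ⟨w0, hw0, by simp⟩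
          rw [h] at this
          simpa using this
        · rintro _ ⟨w, hw, rfl⟩ hu _ ⟨w', hw', rfl⟩
          simp only [LinearMap.toSpanSingleton_apply, smul_eq_mul] at hu ⊢
          have hwM' : w * a ∉ M := fun h => hu (hL' w hw h)
          obtain ⟨r, hr⟩ := gen w hwM' (w' * a)
          refine ⟨r, ?_⟩
          have := hL' (w' - r * w) (L.sub_mem hw' (L.mul_mem_left _ hw)) (by rwa [sub_mul])
          rw [sub_mul, sub_eq_zero] at this
          rw [this, mul_assoc]
  apply hp_srank_top
  intro k
  obtain ⟨x, L, -, h⟩ := key k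
  exact ⟨x, by simpa using h 0 L.zero_mem⟩

/-- Brauer's lemma. -/
theorem hp_idem {A : Type*} [Ring A] (hp : IsPrimeAlgebra A) (N : Ideal A) (hN : N ≠ ⊥)
    (hmin : ∀ u ∈ N, u ≠ 0 → ∀ v ∈ N, ∃ r, r * u = v) :
    ∃ e : A, e ≠ 0 ∧ e * e = e ∧ ∀ u : A, u * e ≠ 0 → ∃ r, r * (u * e) = e := by
  obtain ⟨n, hn, hn0⟩ := (Submodule.ne_bot_iff _).1 hN
  obtain ⟨z, hz⟩ := hp_prime hp hn0 hn0
  have hzn : z * n ∈ N := N.mul_mem_left _ hn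
  have hzn0 : z * n ≠ 0 := by
    intro h; apply hz; rw [mul_assoc, h, mul_zero]
  have h2 : n * (z * n) ≠ 0 := by rwa [← mul_assoc]
  obtain ⟨r, hr⟩ := hmin (n * (z * n)) (N.mul_mem_left _ hzn) h2 (z * n) hzn
  have heN : r * n ∈ N := N.mul_mem_left _ hn
  have he1 : r * n * (z * n) = z * n := by rw [mul_assoc, hr]
  generalize r * n = e at heN he1
  have he0 : e ≠ 0 := by rintro rfl; rw [zero_mul] at he1; exact hzn0 he1.symm
  refine ⟨e, he0, ?_, fun u hu => hmin _ (N.mul_mem_left _ heN) hu e heN⟩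
  by_contra hne
  have hd : e * e - e ≠ 0 := sub_ne_zero.2 hne
  have hdN : e * e - e ∈ N := N.sub_mem (N.mul_mem_left _ heN) heN
  obtain ⟨s, hs⟩ := hmin _ hdN hd e heN
  apply hzn0
  calc z * n = e * (z * n) := he1.symm
    _ = s * (e * e - e) * (z * n) := by rw [hs]
    _ = s * (e * (e * (z * n)) - e * (z * n)) := by noncomm_ring
    _ = 0 := by rw [he1, he1, sub_self, mul_zero]

/-- Gelfand–Mazur for the corner `eAe`. -/
theorem hp_corner {A : Type*} [NormedRing A] [NormedAlgebra ℂ A] [CompleteSpace A]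
    {e : A} (he0 : e ≠ 0) (he : e * e = e) (hmin : ∀ u : A, u * e ≠ 0 → ∃ r, r * (u * e) = e)
    (a : A) : ∃ l : ℂ, e * a * e = l • e := by
  have inv : ∀ t : A, e * t = t → t * e = t → t ≠ 0 →
      ∃ v, e * v = v ∧ v * e = v ∧ v * t = e ∧ t * v = e := by
    have linv : ∀ t : A, e * t = t → t * e = t → t ≠ 0 →
        ∃ v, e * v = v ∧ v * e = v ∧ v * t = e := by
      intro t h1 h2 h3
      obtain ⟨r, hr⟩ := hmin t (by rwa [h2])
      rw [h2] at hr
      refine ⟨e * r * e, ?_, ?_, ?_⟩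
      · rw [← mul_assoc, ← mul_assoc, he]
      · rw [mul_assoc, he]
      · rw [mul_assoc, h1, mul_assoc, hr, he]
    intro t h1 h2 h3
    obtain ⟨v, a1, a2, a3⟩ := linv t h1 h2 h3
    have hv0 : v ≠ 0 := by rintro rfl; rw [zero_mul] at a3; exact he0 a3.symm
    obtain ⟨u, b1, b2, b3⟩ := linv v a1 a2 hv0
    have hut : u = t := by
      calc u = u * (v * t) := by rw [a3, b2]
        _ = t := by rw [← mul_assoc, b3, h1]
    exact ⟨v, a1, a2, a3, by rw [← hut]; exact b3⟩
  by_contra hcon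
  push Not at hcon
  have ht1 : e * (e * a * e) = e * a * e := by rw [← mul_assoc, ← mul_assoc, he]
  have ht2 : (e * a * e) * e = e * a * e := by rw [mul_assoc, he]
  generalize e * a * e = t at hcon ht1 ht2
  have hspec : spectrum ℂ t ⊆ {0} := by
    intro l hl
    by_contra hl0
    simp only [Set.mem_singleton_iff] at hl0
    apply hl
    obtain ⟨v, c1, c2, c3, c4⟩ := inv (l • e - t) (by simp [mul_sub, he, ht1])
      (by simp [sub_mul, he, ht2]) (by rw [sub_ne_zero]; exact (hcon l).symm)
    have hl1 : algebraMap ℂ A l = l • (1 : A) := Algebra.algebraMap_eq_smul_one l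
    have c3' : l • v - v * t = e := by rw [← c3, mul_sub, mul_smul_comm, c2]
    have c4' : l • v - t * v = e := by rw [← c4, sub_mul, smul_mul_assoc, c1]
    refine ⟨⟨algebraMap ℂ A l - t, v + l⁻¹ • (1 - e), ?_, ?_⟩, rfl⟩
    · rw [hl1]
      have : (l • (1 : A) - t) * (v + l⁻¹ • (1 - e))
        = (l • v - t * v) + (l * l⁻¹) • (1 - e) - l⁻¹ • (t - t * e) := by
        simp only [sub_mul, mul_add, mul_sub, smul_mul_assoc, mul_smul_comm, one_mul, mul_one,
          smul_sub]
        module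
      rw [this, c4', ht2, mul_inv_cancel₀ hl0]; simp
    · rw [hl1]
      have : (v + l⁻¹ • (1 - e)) * (l • (1 : A) - t)
        = (l • v - v * t) + (l⁻¹ * l) • (1 - e) - l⁻¹ • (t - e * t) := by
        simp only [sub_mul, add_mul, mul_sub, smul_mul_assoc, mul_smul_comm, one_mul, mul_one,
          smul_sub]
        module
      rw [this, c3', ht1, inv_mul_cancel₀ hl0]; simp
  have hrad : spectralRadius ℂ t = 0 := by
    unfold spectralRadius
    simp only [ENNReal.iSup_eq_zero]
    intro l hl
    have := hspec hl
    simp only [Set.mem_singleton_iff] at this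
    simp [this]
  obtain ⟨v, c1, c2, c3, c4⟩ := inv t ht1 ht2 (by simpa using hcon 0)
  have hlim := spectrum.pow_nnnorm_pow_one_div_tendsto_nhds_spectralRadius t
  rw [hrad] at hlim
  have hc : (0 : ENNReal) < (((‖v‖₊ + 1)⁻¹ : NNReal) : ENNReal) := by
    simp only [ENNReal.coe_pos]; positivity
  have hev := (hlim.eventually_lt_const hc).and (Filter.eventually_ge_atTop 1)
  obtain ⟨n, hn, hn1⟩ := hev.exists
  have hnpos : (0 : ℝ) < n := by exact_mod_cast hn1
  have h1 : ‖t ^ n‖₊ ≤ ((‖v‖₊ + 1)⁻¹ : NNReal) ^ n := by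
    have h2 := ENNReal.rpow_le_rpow hn.le hnpos.le
    rw [← ENNReal.rpow_mul, one_div, inv_mul_cancel₀ hnpos.ne', ENNReal.rpow_one,
      ENNReal.rpow_natCast] at h2
    exact_mod_cast h2
  have hcomm : Commute v t := by rw [Commute, SemiconjBy, c3, c4]
  have hen : ∀ m : ℕ, e ^ (m + 1) = e := by
    intro m
    induction m with
    | zero => simp
    | succ m ih => rw [pow_succ, ih, he]
  have hprod : v ^ n * t ^ n = e := by
    rw [← hcomm.mul_pow, c3]
    obtain ⟨m, rfl⟩ := Nat.exists_eq_add_of_le' hn1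
    exact hen m
  have hepos : (0 : NNReal) < ‖e‖₊ := by simpa [nnnorm_pos] using he0
  have he1 : 1 ≤ ‖e‖₊ := by
    have : ‖e‖₊ ≤ ‖e‖₊ * ‖e‖₊ := by
      conv_lhs => rw [← he]
      exact nnnorm_mul_le e e
    by_contra hlt
    push Not at hlt
    have := mul_lt_of_lt_one_left hepos hlt
    order
  have h3 : ‖e‖₊ ≤ (‖v‖₊ * (‖v‖₊ + 1)⁻¹) ^ n := by
    rw [← hprod, mul_pow]
    refine (nnnorm_mul_le _ _).trans ?_
    exact mul_le_mul' (nnnorm_pow_le' v hn1) h1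
  have h4 : ‖v‖₊ * (‖v‖₊ + 1)⁻¹ < 1 := by
    rw [← div_eq_mul_inv, div_lt_one (by positivity)]
    exact lt_add_one _
  have h5 : (‖v‖₊ * (‖v‖₊ + 1)⁻¹) ^ n < 1 := pow_lt_one₀ (by positivity) h4 (by omega)
  order

/-- Finite rank elements lie in every two-sided ideal containing `e`. -/
theorem hp_socle_sub {A : Type*} [Ring A] [Algebra ℂ A] (hp : IsPrimeAlgebra A)
    {e : A} (he0 : e ≠ 0) (he : e * e = e) (hc : ∀ a : A, ∃ l : ℂ, e * a * e = l • e)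
    (J : TwoSidedIdeal A) (heJ : e ∈ J) {a : A} (hr : srank a ≠ ⊤) : a ∈ J := by
  by_contra haJ
  apply hr
  have key : ∀ k : ℕ, ∃ x g : A, 1 - g ∈ J ∧ ∀ w, hpPts k ⊆ spectrum ℂ ((x + w * g) * a) := by
    intro k
    induction k with
    | zero => exact ⟨0, 1, by simp, by simp [hpPts]⟩
    | succ k ih =>
      obtain ⟨x, g, hg, hw⟩ := ih
      have hga : g * a ≠ 0 := by
        intro h
        apply haJ
        have := J.mul_mem_right _ a hg
        rwa [sub_mul, one_mul, h, sub_zero] at this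
      obtain ⟨m, hm⟩ := hp_prime hp hga he0
      obtain ⟨y, hy⟩ := hp_prime hp he0 hm
      obtain ⟨l, hl⟩ := hc (y * (g * a * m))
      have hl' : e * y * (g * a * m * e) = l • e := by rw [← hl]; noncomm_ring
      have hl0 : l ≠ 0 := by
        rintro rfl; rw [zero_smul] at hl'; exact hy hl'
      set y' := l⁻¹ • y with hy'
      have hy1 : e * y' * (g * a * m * e) = e := by
        rw [hy', mul_smul_comm, smul_mul_assoc, hl', smul_smul, inv_mul_cancel₀ hl0, one_smul]
      have hme0 : m * e ≠ 0 := by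
        intro h; apply hm; rw [mul_assoc, h, mul_zero]
      set f := g * a * m * e * y' with hf
      set r : A := (((k : ℂ) + 1) • (m * e) - x * a * m * e) * e * y' with hrr
      refine ⟨x + r * g, (1 - f) * g, ?_, ?_⟩
      · have hfJ : f * g ∈ J := by
          apply J.mul_mem_right
          apply J.mul_mem_right
          exact J.mul_mem_left _ _ heJ
        have := J.add_mem hg hfJ
        convert this using 1
        noncomm_ring
      · intro w
        apply hp_pts_succ
        · have := hw (r + w * (1 - f))
          convert this using 3
          noncomm_ring
        · intro hu
          apply hme0
          have hz : (algebraMap ℂ A ((k : ℂ) + 1) - (x + r * g + w * ((1 - f) * g)) * a) * (m * e)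
              = 0 := by
            have e1 : r * (g * a * m * e) = ((k : ℂ) + 1) • (m * e) - x * a * m * e := by
              rw [hrr, mul_assoc _ e, mul_assoc _ (e * y'), hy1, sub_mul, smul_mul_assoc,
                mul_assoc m, he, mul_assoc (x * a * m), he]
            have e2 : f * (g * a * m * e) = g * a * m * e := by
              calc f * (g * a * m * e) = g * a * m * (e * y' * (g * a * m * e)) := by
                    rw [hf]; noncomm_ring
                _ = _ := by rw [hy1]
            have e3 : (algebraMap ℂ A ((k : ℂ) + 1) - (x + r * g + w * ((1 - f) * g)) * a) * (m * e)
              = algebraMap ℂ A ((k : ℂ) + 1) * (m * e) - x * a * m * e - r * (g * a * m * e)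
                - w * (g * a * m * e - f * (g * a * m * e)) := by
              simp only [sub_mul, add_mul, mul_sub, mul_add, mul_one, one_mul, mul_assoc]
              abel
            rw [e3, e1, e2, ← Algebra.smul_def]
            simp
          exact (hu.mul_right_eq_zero).1 hz
  apply hp_srank_top
  intro k
  obtain ⟨x, g, -, h⟩ := key k
  exact ⟨x, by simpa using h 0⟩

/-- `z ↦ a z e` -/
def hpOp {A : Type*} [Ring A] [Algebra ℂ A] (e a : A) : A →ₗ[ℂ] A :=
  (LinearMap.mulRight ℂ e).comp (LinearMap.mulLeft ℂ a)

theorem hpOp_apply {A : Type*} [Ring A] [Algebra ℂ A] (e a z : A) : hpOp e a z = a * z * e := by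
  simp [hpOp]

/-- Elements acting with finite rank on `Ae` have finite spectral rank. -/
theorem hp_fin_srank {A : Type*} [Ring A] [Algebra ℂ A] (hp : IsPrimeAlgebra A)
    {e : A} (he0 : e ≠ 0) {a : A} (hfin : FiniteDimensional ℂ (LinearMap.range (hpOp e a))) :
    srank a ≠ ⊤ := by
  set R := LinearMap.range (hpOp e a) with hR
  have hle : srank a ≤ (Module.finrank ℂ R : ℕ∞) := by
    apply iSup_le
    intro x
    rw [nzSpec, spectrum.nonzero_mul_comm]
    have hmaps : ∀ v ∈ R, LinearMap.mulLeft ℂ (a * x) v ∈ R := by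
      rintro _ ⟨z, rfl⟩
      refine ⟨x * a * z, ?_⟩
      simp [hpOp_apply, mul_assoc]
    let T : R →ₗ[ℂ] R := (LinearMap.mulLeft ℂ (a * x)).restrict hmaps
    let q := T.charpoly
    have hq : Polynomial.aeval T q = 0 := LinearMap.aeval_self_charpoly T
    have hq0 : q ≠ 0 := (LinearMap.charpoly_monic T).ne_zero
    have hact : ∀ (p : Polynomial ℂ) (v : R),
        ((Polynomial.aeval T p v : R) : A) = Polynomial.aeval (a * x) p * (v : A) := by
      intro p
      induction p using Polynomial.induction_on' with
      | add p q hp hq => intro v; simp [add_mul, hp v, hq v]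
      | monomial n c =>
        intro v
        have hpow : ∀ v : R, (((T ^ n) v : R) : A) = (a * x) ^ n * (v : A) := by
          induction n with
          | zero => simp
          | succ n ih => intro v; rw [pow_succ, Module.End.mul_apply, ih, pow_succ, mul_assoc]; rfl
        rw [Polynomial.aeval_monomial, Polynomial.aeval_monomial, ← Algebra.smul_def,
          ← Algebra.smul_def, LinearMap.smul_apply, Submodule.coe_smul, hpow v, smul_mul_assoc]
    have hqa : Polynomial.aeval (a * x) q * a = 0 := by
      by_contra hne
      obtain ⟨z, hz⟩ := hp_prime hp hne he0
      apply hz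
      have := hact q ⟨hpOp e a z, ⟨z, rfl⟩⟩
      rw [hq] at this
      simp only [LinearMap.zero_apply, ZeroMemClass.coe_zero, hpOp_apply] at this
      rw [this]; noncomm_ring
    have hsub : spectrum ℂ (a * x) \ {0} ⊆ (q.roots.toFinset : Set ℂ) := by
      rintro l ⟨hl, hl0⟩
      have h1 : Polynomial.aeval (a * x) (q * Polynomial.X) = 0 := by
        rw [map_mul, Polynomial.aeval_X, ← mul_assoc, hqa, zero_mul]
      have h2 := spectrum.subset_polynomial_aeval (a * x) (q * Polynomial.X) ⟨l, hl, rfl⟩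
      rw [h1] at h2
      have hnt : Nontrivial A := ⟨⟨e, 0, he0⟩⟩
      rw [spectrum.zero_eq] at h2
      simp only [Polynomial.eval_mul, Polynomial.eval_X, Set.mem_singleton_iff, mul_eq_zero] at h2
      rcases h2 with h2 | h2
      · simp [hq0, h2]
      · exact absurd h2 hl0
    refine (Set.encard_le_encard hsub).trans ?_
    rw [Set.encard_coe_eq_coe_finsetCard]
    have h3 : q.roots.toFinset.card ≤ Module.finrank ℂ R := by
      refine (Multiset.toFinset_card_le _).trans ((Polynomial.card_roots' q).trans ?_)
      exact (LinearMap.charpoly_natDegree T).le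
    exact_mod_cast h3
  exact ne_top_of_le_ne_top (ENat.natCast_ne_top _) hle

/-- The ideal of elements acting with finite rank on `Ae`. -/
def hpIdeal {A : Type*} [Ring A] [Algebra ℂ A] (e : A) : TwoSidedIdeal A :=
  TwoSidedIdeal.mk' {a | FiniteDimensional ℂ (LinearMap.range (hpOp e a))}
    (by
      have : hpOp e (0 : A) = 0 := by ext; simp [hpOp_apply]
      change FiniteDimensional ℂ (LinearMap.range (hpOp e 0))
      rw [this, LinearMap.range_zero]
      infer_instance)
    (by
      intro x y hx hy
      simp only [Set.mem_ofPred_eq] at *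
      refine Submodule.finiteDimensional_of_le
        (S₂ := LinearMap.range (hpOp e x) ⊔ LinearMap.range (hpOp e y)) ?_
      rintro _ ⟨z, rfl⟩
      rw [hpOp_apply, add_mul, add_mul, ← hpOp_apply, ← hpOp_apply]
      exact Submodule.add_mem_sup ⟨z, rfl⟩ ⟨z, rfl⟩)
    (by
      intro x hx
      simp only [Set.mem_ofPred_eq] at *
      refine Submodule.finiteDimensional_of_le (S₂ := LinearMap.range (hpOp e x)) ?_
      rintro _ ⟨z, rfl⟩
      exact ⟨-z, by simp [hpOp_apply]⟩)
    (by
      intro x y hy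
      simp only [Set.mem_ofPred_eq] at *
      refine Submodule.finiteDimensional_of_le
        (S₂ := (LinearMap.range (hpOp e y)).map (LinearMap.mulLeft ℂ x)) ?_
      rintro _ ⟨z, rfl⟩
      exact ⟨hpOp e y z, ⟨z, rfl⟩, by simp [hpOp_apply, mul_assoc]⟩)
    (by
      intro x y hx
      simp only [Set.mem_ofPred_eq] at *
      refine Submodule.finiteDimensional_of_le (S₂ := LinearMap.range (hpOp e x)) ?_
      rintro _ ⟨z, rfl⟩
      exact ⟨y * z, by simp [hpOp_apply, mul_assoc]⟩)

theorem hp_mem_ideal {A : Type*} [Ring A] [Algebra ℂ A] (e a : A) :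
    a ∈ hpIdeal e ↔ FiniteDimensional ℂ (LinearMap.range (hpOp e a)) := by
  simp [hpIdeal]

theorem hp_ideal_ne_bot {A : Type*} [Ring A] {J : TwoSidedIdeal A} {x : A} (hx : x ∈ J)
    (h0 : x ≠ 0) : J ≠ ⊥ := by
  rintro rfl
  exact h0 (by simpa using hx)

theorem hp_exists_ne {A : Type*} [Ring A] {J : TwoSidedIdeal A} (h : J ≠ ⊥) :
    ∃ x ∈ J, x ≠ 0 := by
  by_contra hcon
  push Not at hcon
  apply h
  rw [eq_bot_iff]
  intro x hx
  rw [hcon x hx]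
  exact zero_mem _

end Helpers

theorem prime_iff_socle_minimal_and_leftAnn_trivial
    {A : Type*} [NormedRing A] [NormOneClass A] [NormedAlgebra ℂ A] [CompleteSpace A]
    (hss : JacobsonSemisimple A) (hsoc : socle A ≠ {0}) :
    IsPrimeAlgebra A ↔ (SocleIsMinimalTwoSidedIdeal A ∧ LeftAnnSocleTrivial A) := by
  constructor
  · intro hp
    have h0 : (0 : A) ∈ socle A := by
      have : srank (0 : A) = 0 := by
        have hnt : Nontrivial A := NormOneClass.nontrivial
        simp [srank, nzSpec, spectrum.zero_eq]
      simp [socle, this]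
    obtain ⟨a, ha, ha0⟩ : ∃ a ∈ socle A, a ≠ 0 := by
      by_contra hcon
      push Not at hcon
      exact hsoc (Set.eq_singleton_iff_unique_mem.2 ⟨h0, hcon⟩)
    obtain ⟨N, hN, hmin⟩ := hp_minimal_left hss ha0 ha
    obtain ⟨e, he0, he, hinv⟩ := hp_idem hp N hN hmin
    have hc := hp_corner he0 he hinv
    have heI : e ∈ hpIdeal e := by
      rw [hp_mem_ideal]
      refine Submodule.finiteDimensional_of_le (S₂ := Submodule.span ℂ {e}) ?_
      rintro _ ⟨z, rfl⟩
      rw [hpOp_apply]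
      obtain ⟨l, hl⟩ := hc z
      rw [hl]
      exact Submodule.smul_mem _ _ (Submodule.mem_span_singleton_self e)
    have hI : (hpIdeal e : Set A) = socle A := by
      ext b
      constructor
      · intro hb
        exact hp_fin_srank hp he0 ((hp_mem_ideal e b).1 hb)
      · intro hb
        exact hp_socle_sub hp he0 he hc _ heI hb
    refine ⟨⟨hpIdeal e, hI, hp_ideal_ne_bot heI he0, ?_⟩, ?_⟩
    · intro J hJ
      by_cases hJ0 : J = ⊥
      · exact Or.inl hJ0
      · right
        apply le_antisymm hJ
        obtain ⟨j, hj, hj0⟩ := hp_exists_ne hJ0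
        obtain ⟨y, hy⟩ := hp_prime hp hj0 he0
        obtain ⟨x, hx⟩ := hp_prime hp he0 hy
        obtain ⟨l, hl⟩ := hc (x * (j * y))
        have hl' : e * x * (j * y * e) = l • e := by rw [← hl]; noncomm_ring
        have hl0 : l ≠ 0 := by
          rintro rfl; rw [zero_smul] at hl'; exact hx hl'
        have heJ : e ∈ J := by
          have h1 : (algebraMap ℂ A l⁻¹ * (e * x)) * (j * y * e) ∈ J :=
            J.mul_mem_left _ _ (J.mul_mem_right _ _ (J.mul_mem_right _ _ hj))
          rwa [mul_assoc, hl', ← Algebra.smul_def, smul_smul, inv_mul_cancel₀ hl0, one_smul] at h1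
        intro b hb
        have hb' : b ∈ socle A := by rw [← hI]; exact hb
        exact hp_socle_sub hp he0 he hc J heJ hb'
    · refine Set.eq_singleton_iff_unique_mem.2 ⟨by simp, ?_⟩
      intro x hx
      by_contra hx0
      obtain ⟨z, hz⟩ := hp_prime hp hx0 he0
      apply hz
      rw [mul_assoc]
      apply hx
      rw [← hI]
      exact (hpIdeal e).mul_mem_left _ _ heI
  · rintro ⟨⟨I, hI, hI0, hmin⟩, hann⟩
    have hann' : ∀ x : A, (∀ y ∈ I, x * y = 0) → x = 0 := by
      intro x hx
      have : x ∈ {x : A | ∀ y ∈ socle A, x * y = 0} := by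
        intro y hy
        rw [← hI] at hy
        exact hx y hy
      rw [hann] at this
      simpa using this
    have hle : ∀ J : TwoSidedIdeal A, J ≠ ⊥ → I ≤ J := by
      intro J hJ
      obtain ⟨j, hj, hj0⟩ := hp_exists_ne hJ
      obtain ⟨y, hy, hjy⟩ : ∃ y ∈ I, j * y ≠ 0 := by
        by_contra hcon
        push Not at hcon
        exact hj0 (hann' j hcon)
      have hmem : j * y ∈ J ⊓ I :=
        (TwoSidedIdeal.mem_inf A).2 ⟨J.mul_mem_right _ _ hj, I.mul_mem_left _ _ hy⟩
      rcases hmin (J ⊓ I) inf_le_right with h | h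
      · exact absurd h (hp_ideal_ne_bot hmem hjy)
      · rw [← h]; exact inf_le_left
    intro J K hJ hK
    by_contra hcon
    push Not at hcon
    obtain ⟨i, hi, hi0⟩ := hp_exists_ne hI0
    exact hi0 (hann' i fun y hy => hcon i (hle J hJ hi) y (hle K hK hy))
end
end

section
/- Let A be a complex semisimple unital Banach algebra, let N be a nonempty open subset of A, and let a, b ∈ A. If σ(ax) and σ(bx) are finite and equal for all x ∈ N, then a = b. -/
open Complex

noncomputable section

open Filter Topology in
theorem qn_pow_lt {C : Type*} [NormedRing C] [NormedAlgebra ℂ C] [CompleteSpace C]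
    (c : C) (hc : spectrum ℂ c ⊆ {0}) (δ : ℝ) (hδ : 0 < δ) :
    ∃ k : ℕ, ‖c ^ (2 ^ k)‖ < δ ^ (2 ^ k) := by
  have h0 : spectralRadius ℂ c = 0 := by
    unfold spectralRadius
    simp only [ENNReal.iSup_eq_zero]
    intro i hi
    have : i = 0 := hc hi
    simp [this]
  have h1 := spectrum.pow_norm_pow_one_div_tendsto_nhds_spectralRadius c
  rw [h0] at h1
  have h2 : ∀ᶠ n : ℕ in atTop, ENNReal.ofReal (‖c ^ n‖ ^ (1 / n : ℝ)) < ENNReal.ofReal δ :=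
    h1.eventually (gt_mem_nhds (by simpa using hδ))
  have h3 : Tendsto (fun k : ℕ => 2 ^ k) atTop atTop :=
    tendsto_pow_atTop_atTop_of_one_lt (by norm_num)
  obtain ⟨k, hk⟩ := (h3.eventually h2).exists
  refine ⟨k, ?_⟩
  rw [ENNReal.ofReal_lt_ofReal_iff hδ] at hk
  have h4 : (0 : ℝ) < ((2 ^ k : ℕ) : ℝ) := by positivity
  have h5 := Real.rpow_lt_rpow (by positivity) hk h4
  rw [← Real.rpow_mul (norm_nonneg _), one_div, inv_mul_cancel₀ h4.ne', Real.rpow_one,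
    Real.rpow_natCast] at h5
  exact h5

/-- Quasinilpotency propagates from a circle to the inside. -/
theorem qn_inside {C : Type*} [NormedRing C] [NormedAlgebra ℂ C] [CompleteSpace C]
    [NormOneClass C] (F : ℂ → C) (hF : Differentiable ℂ F) (R : ℝ) (hR : 0 < R)
    (hs : ∀ μ : ℂ, ‖μ‖ = R → spectrum ℂ (F μ) ⊆ {0}) (μ : ℂ) (hμ : ‖μ‖ ≤ R)
    (q : ℂ) (hq : q ∈ spectrum ℂ (F μ)) : q = 0 := by
  have : Nontrivial C := NormOneClass.nontrivial
  have key : ∀ δ : ℝ, 0 < δ → ‖q‖ ≤ δ := by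
    intro δ hδ
    let U : ℕ → Set ℂ := fun k => {z | ‖F z ^ (2 ^ k)‖ < δ ^ (2 ^ k)}
    have hUo : ∀ k, IsOpen (U k) := fun k =>
      isOpen_lt ((hF.continuous.pow _).norm) continuous_const
    have hmono : Monotone U := by
      refine monotone_nat_of_le_succ ?_
      intro k z hz
      simp only [U, Set.mem_ofPred_eq] at hz ⊢
      rw [pow_succ 2 k, pow_mul, pow_mul]
      calc ‖(F z ^ 2 ^ k) ^ 2‖ ≤ ‖F z ^ 2 ^ k‖ ^ 2 := norm_pow_le _ _
        _ < (δ ^ 2 ^ k) ^ 2 := by gcongr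
    obtain ⟨k, hk⟩ := (isCompact_sphere (0 : ℂ) R).elim_directed_cover U hUo
      (by
        intro z hz
        obtain ⟨k, hk⟩ := qn_pow_lt (F z) (hs z (by simpa using hz)) δ hδ
        exact Set.mem_iUnion.2 ⟨k, hk⟩) hmono.directed_le
    have h1 : ‖F μ ^ (2 ^ k)‖ ≤ δ ^ (2 ^ k) := by
      refine Complex.norm_le_of_forall_mem_frontier_norm_le (U := Metric.ball (0 : ℂ) R)
        Metric.isBounded_ball (f := fun z => F z ^ (2 ^ k)) ?_ ?_ ?_
      · exact (hF.pow _).diffContOnCl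
      · intro z hz
        rw [frontier_ball _ hR.ne'] at hz
        exact (hk hz).le
      · rw [closure_ball _ hR.ne']
        simpa using hμ
    have h2 : q ^ (2 ^ k) ∈ spectrum ℂ (F μ ^ (2 ^ k)) := by
      rw [spectrum.map_pow]
      exact ⟨q, hq, rfl⟩
    have h3 := (spectrum.norm_le_norm_of_mem h2).trans h1
    rw [norm_pow] at h3
    exact le_of_pow_le_pow_left₀ (by positivity) hδ.le h3
  by_contra hne
  have := key (‖q‖ / 2) (by positivity)
  have h0 : 0 < ‖q‖ := by positivity
  linarith

/-- The Vandermonde type product. -/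
def vdm {m : ℕ} {R : Type*} [Ring R] (T : Fin m → R) : R :=
  ((List.finRange m).map T).prod *
    (((Finset.univ : Finset (Fin m)).offDiag.toList).map (fun p => T p.1 - T p.2)).prod

theorem vdm_map {m : ℕ} {R S : Type*} [Ring R] [Ring S] (f : R →+* S) (T : Fin m → R) :
    f (vdm T) = vdm (fun i => f (T i)) := by
  simp only [vdm, map_mul, map_list_prod, List.map_map]
  congr 3
  funext p
  simp

theorem vdm_eq_zero_iff {m : ℕ} (t : Fin m → ℂ) :
    vdm t = 0 ↔ (∃ i, t i = 0) ∨ ¬ Function.Injective t := by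
  simp only [vdm, mul_eq_zero, List.prod_eq_zero_iff, List.mem_map, List.mem_finRange, true_and,
    Finset.mem_toList, Finset.mem_offDiag, Finset.mem_univ, Prod.exists, sub_eq_zero]
  apply or_congr Iff.rfl
  simp only [Function.Injective]
  push Not
  constructor
  · rintro ⟨a, b, h1, h2⟩; exact ⟨a, b, h2, h1⟩
  · rintro ⟨a, b, h2, h1⟩; exact ⟨a, b, h1, h2⟩

theorem list_prod_diff {C : Type*} [NormedRing C] [NormedAlgebra ℂ C] {ι : Type*} (l : List ι)
    (f : ι → ℂ → C) (hf : ∀ i, Differentiable ℂ (f i)) :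
    Differentiable ℂ (fun z => (l.map (fun i => f i z)).prod) := by
  induction l with
  | nil => simp
  | cons a l ih =>
    simp only [List.map_cons, List.prod_cons]
    exact (hf a).mul ih

theorem vdm_diff {C : Type*} [NormedRing C] [NormedAlgebra ℂ C] {m : ℕ}
    (f : Fin m → ℂ → C) (hf : ∀ i, Differentiable ℂ (f i)) :
    Differentiable ℂ (fun z => vdm (fun i => f i z)) := by
  unfold vdm
  refine (list_prod_diff _ f hf).mul (list_prod_diff _ (fun (p : Fin m × Fin m) z => f p.1 z - f p.2 z) ?_)
  intro p
  exact (hf _).sub (hf _)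

theorem list_prod_eig {E : Type*} [NormedAddCommGroup E] [NormedSpace ℂ E] {ι : Type*}
    (l : List ι) (f : ι → E →L[ℂ] E) (t : ι → ℂ) (v : E) (h : ∀ i, f i v = t i • v) :
    (l.map f).prod v = (l.map t).prod • v := by
  induction l with
  | nil => simp
  | cons a l ih =>
    simp only [List.map_cons, List.prod_cons, mul_apply_eq_comp, ih, map_smul, h,
      smul_smul]
    rw [mul_comm]

theorem vdm_eig {E : Type*} [NormedAddCommGroup E] [NormedSpace ℂ E] {m : ℕ}
    (f : Fin m → E →L[ℂ] E) (t : Fin m → ℂ) (v : E) (h : ∀ i, f i v = t i • v) :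
    vdm f v = vdm t • v := by
  unfold vdm
  rw [mul_apply_eq_comp, list_prod_eig _ _ (fun p : Fin m × Fin m => t p.1 - t p.2), map_smul,
    list_prod_eig _ _ t _ h, smul_smul, mul_comm]
  intro p
  simp [h, sub_smul]

theorem vdm_spectrum {C : Type*} [NormedRing C] [NormedAlgebra ℂ C] [CompleteSpace C]
    {m : ℕ} (T : Fin m → C) (hT : ∀ i j, Commute (T i) (T j)) (q : ℂ)
    (hq : q ∈ spectrum ℂ (vdm T)) :
    ∃ t : Fin m → ℂ, (∀ i, t i ∈ spectrum ℂ (T i)) ∧ q = vdm t := by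
  let Z : Subalgebra ℂ C := Subalgebra.centralizer ℂ (Set.centralizer (Set.range T))
  have hTc : Set.range T ⊆ Set.centralizer (Set.range T) := by
    rintro _ ⟨i, rfl⟩ _ ⟨j, rfl⟩
    exact hT j i
  have hTZ : ∀ i, T i ∈ Z := by
    intro i
    rw [Subalgebra.mem_centralizer_iff]
    intro g hg
    exact (hg (T i) ⟨i, rfl⟩).symm
  have hcomm : ∀ x y : Z, x * y = y * x := by
    rintro ⟨x, hx⟩ ⟨y, hy⟩
    apply Subtype.ext
    change x * y = y * x
    have hy' : y ∈ Set.centralizer (Set.range T) := by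
      intro g hg
      exact (Subalgebra.mem_centralizer_iff ℂ).1 hy g (hTc hg)
    exact ((Subalgebra.mem_centralizer_iff ℂ).1 hx y hy').symm
  let : NormedCommRing Z := { (inferInstance : NormedRing Z) with mul_comm := hcomm }
  have hcl : IsClosed (Z : Set C) := Set.isClosed_centralizer _
  have : CompleteSpace Z := hcl.completeSpace_coe
  have hunit : ∀ z : Z, IsUnit (z : C) → IsUnit z := by
    rintro ⟨z, hz⟩ ⟨u, hu⟩
    have hu' : (u : C) = z := hu
    have hinv : ((u⁻¹ : Cˣ) : C) ∈ Z := by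
      rw [Subalgebra.mem_centralizer_iff] at hz ⊢
      intro g hg
      have := hz g hg
      have hc : Commute g (u : C) := by rw [hu']; exact this
      exact hc.units_inv_right
    refine IsUnit.of_mul_eq_one ⟨_, hinv⟩ ?_
    apply Subtype.ext
    change z * _ = 1
    rw [← hu']; simp
  let T' : Fin m → Z := fun i => ⟨T i, hTZ i⟩
  have hv : ((vdm T' : Z) : C) = vdm T := vdm_map (Z.val : Z →+* C) T'
  have hq' : q ∈ spectrum ℂ (vdm T') := by
    rw [spectrum.mem_iff] at hq ⊢
    intro hu
    apply hq
    have := hu.map Z.val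
    rw [map_sub] at this
    rw [← hv]
    simpa using this
  obtain ⟨χ, hχ⟩ := WeakDual.CharacterSpace.mem_spectrum_iff_exists.1 hq'
  refine ⟨fun i => χ (T' i), ?_, ?_⟩
  · intro i
    have h1 : χ (T' i) ∈ spectrum ℂ (T' i) := AlgHom.apply_mem_spectrum χ (T' i)
    rw [spectrum.mem_iff] at h1 ⊢
    intro hu
    exact h1 (hunit _ hu)
  · rw [← hχ]
    exact vdm_map (RingHomClass.toRingHom χ) T'


theorem exists_functional_of_range {A : Type*} [NormedRing A] [NormedAlgebra ℂ A]
    [CompleteSpace A] (T : A →ₗ[ℂ] A) (hT : ∀ z, ¬ IsUnit (T z)) :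
    ∃ φ : A →L[ℂ] ℂ, φ 1 = 1 ∧ ∀ z, φ (T z) = 0 := by
  let p : Submodule ℂ A := (LinearMap.range T).topologicalClosure
  have hcl : IsClosed (p : Set A) := Submodule.isClosed_topologicalClosure _
  have h1 : (1 : A) ∉ p := by
    intro h
    have h' : (1 : A) ∈ closure (LinearMap.range T : Set A) := h
    obtain ⟨y, hy, hy'⟩ := mem_closure_iff.1 h' {u | IsUnit u} Units.isOpen isUnit_one
    obtain ⟨z, rfl⟩ := hy'
    exact hT z hy
  have h2 : p.mkQ 1 ≠ 0 := by
    rw [Submodule.mkQ_apply, Ne, Submodule.Quotient.mk_eq_zero]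
    exact h1
  obtain ⟨f, hf⟩ := SeparatingDual.exists_eq_one (R := ℂ) h2
  have hc : Continuous p.mkQ := continuous_quot_mk
  refine ⟨f.comp ⟨p.mkQ, hc⟩, hf, fun z => ?_⟩
  have h3 : p.mkQ (T z) = 0 := by
    rw [Submodule.mkQ_apply, Submodule.Quotient.mk_eq_zero]
    exact Submodule.le_topologicalClosure _ ⟨z, rfl⟩
  change f (p.mkQ (T z)) = 0
  rw [h3, map_zero]

/-- Left or right multiplication. -/
def sideMul (A : Type*) [NormedRing A] [NormedAlgebra ℂ A] (s : Bool) : A →L[ℂ] A →L[ℂ] A :=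
  if s then ContinuousLinearMap.mul ℂ A else (ContinuousLinearMap.mul ℂ A).flip

theorem exists_side {A : Type*} [NormedRing A] [NormedAlgebra ℂ A] [CompleteSpace A]
    (c : A) (α : ℂ) (hα : α ∈ spectrum ℂ c) :
    ∃ (s : Bool) (φ : A →L[ℂ] ℂ), φ 1 = 1 ∧ ∀ z, φ (sideMul A s c z) = α * φ z := by
  by_cases hl : ∃ z, IsUnit ((c - algebraMap ℂ A α) * z)
  · by_cases hr : ∃ z, IsUnit (z * (c - algebraMap ℂ A α))
    · exfalso
      obtain ⟨z, hz⟩ := hl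
      obtain ⟨y, hy⟩ := hr
      rw [spectrum.mem_iff] at hα
      apply hα
      rw [← neg_sub, IsUnit.neg_iff]
      obtain ⟨u, hu⟩ := hz
      obtain ⟨v, hv⟩ := hy
      have e1 : (c - algebraMap ℂ A α) * (z * ↑u⁻¹) = 1 := by
        rw [← mul_assoc, ← hu]; simp
      have e2 : (↑v⁻¹ * y) * (c - algebraMap ℂ A α) = 1 := by
        rw [mul_assoc, ← hv]; simp
      have e3 := left_inv_eq_right_inv e2 e1
      refine ⟨⟨_, _, e1, ?_⟩, rfl⟩
      rw [← e3]; exact e2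
    · push Not at hr
      obtain ⟨φ, h1, h2⟩ := exists_functional_of_range
        (LinearMap.mulRight ℂ (c - algebraMap ℂ A α)) (fun z => by simpa using hr z)
      refine ⟨false, φ, h1, fun z => ?_⟩
      have := h2 z
      simp only [LinearMap.mulRight_apply, mul_sub, map_sub, sub_eq_zero] at this
      simp only [sideMul, Bool.false_eq_true, if_false, ContinuousLinearMap.flip_apply,
        ContinuousLinearMap.mul_apply', this]
      rw [← Algebra.commutes, ← Algebra.smul_def, map_smul, smul_eq_mul]
  · push Not at hl
    obtain ⟨φ, h1, h2⟩ := exists_functional_of_range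
      (LinearMap.mulLeft ℂ (c - algebraMap ℂ A α)) (fun z => by simpa using hl z)
    refine ⟨true, φ, h1, fun z => ?_⟩
    have := h2 z
    simp only [LinearMap.mulLeft_apply, sub_mul, map_sub, sub_eq_zero] at this
    simp only [sideMul, if_true, ContinuousLinearMap.mul_apply', this]
    rw [← Algebra.smul_def, map_smul, smul_eq_mul]

/-- Multilinear forms. -/
abbrev MForm (A : Type*) [NormedRing A] [NormedAlgebra ℂ A] (m : ℕ) :=
  ContinuousMultilinearMap ℂ (fun _ : Fin m => A) ℂ

/-- The action on the `i`-th slot. -/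
def slotOp (A : Type*) [NormedRing A] [NormedAlgebra ℂ A] {m : ℕ} (s : Fin m → Bool) (i : Fin m) :
    A →L[ℂ] (MForm A m →L[ℂ] MForm A m) :=
  ((ContinuousMultilinearMap.compContinuousLinearMapContinuousMultilinear ℂ
    (fun _ : Fin m => A) (fun _ : Fin m => A) ℂ).toContinuousLinearMap
      (fun _ => ContinuousLinearMap.id ℂ A) i).comp (sideMul A (s i))

theorem slotOp_apply {A : Type*} [NormedRing A] [NormedAlgebra ℂ A] {m : ℕ} (s : Fin m → Bool)
    (i : Fin m) (c : A) (Φ : MForm A m) (v : Fin m → A) :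
    slotOp A s i c Φ v = Φ (Function.update v i (sideMul A (s i) c (v i))) := by
  change Φ (fun j => Function.update (fun _ => ContinuousLinearMap.id ℂ A) i
    (sideMul A (s i) c) j (v j)) = _
  congr 1
  funext j
  by_cases h : j = i
  · subst h; simp
  · simp [h]

theorem slotOp_comm {A : Type*} [NormedRing A] [NormedAlgebra ℂ A] {m : ℕ} (s : Fin m → Bool)
    (c : Fin m → A) (i j : Fin m) : Commute (slotOp A s i (c i)) (slotOp A s j (c j)) := by
  by_cases h : i = j
  · subst h; exact Commute.refl _
  · apply ContinuousLinearMap.ext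
    intro Φ
    apply ContinuousMultilinearMap.ext
    intro v
    simp only [mul_apply_eq_comp, slotOp_apply]
    rw [Function.update_comm (Ne.symm h), Function.update_of_ne h, Function.update_of_ne (Ne.symm h)]

theorem slotOp_one {A : Type*} [NormedRing A] [NormedAlgebra ℂ A] {m : ℕ} (s : Fin m → Bool)
    (i : Fin m) : slotOp A s i (1 : A) = 1 := by
  apply ContinuousLinearMap.ext
  intro Φ
  apply ContinuousMultilinearMap.ext
  intro v
  rw [slotOp_apply]
  have : sideMul A (s i) 1 (v i) = v i := by
    unfold sideMul
    split_ifs <;> simp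
  rw [this]
  simp

theorem slotOp_mul_eq_one {A : Type*} [NormedRing A] [NormedAlgebra ℂ A] {m : ℕ}
    (s : Fin m → Bool) (i : Fin m) (c d : A) (h1 : c * d = 1) (h2 : d * c = 1) :
    slotOp A s i c * slotOp A s i d = 1 := by
  apply ContinuousLinearMap.ext
  intro Φ
  apply ContinuousMultilinearMap.ext
  intro v
  rw [mul_apply_eq_comp, slotOp_apply, slotOp_apply]
  have : sideMul A (s i) d (sideMul A (s i) c (v i)) = v i := by
    unfold sideMul
    split_ifs
    · simp [← mul_assoc, h2]
    · simp [mul_assoc, h1]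
  simp [this]

theorem slotOp_spectrum {A : Type*} [NormedRing A] [NormedAlgebra ℂ A] {m : ℕ}
    (s : Fin m → Bool) (i : Fin m) (c : A) (t : ℂ) (ht : t ∈ spectrum ℂ (slotOp A s i c)) :
    t ∈ spectrum ℂ c := by
  rw [spectrum.mem_iff] at ht ⊢
  intro hu
  apply ht
  obtain ⟨u, hu⟩ := hu
  have e : slotOp A s i (u : A) = t • (1 : MForm A m →L[ℂ] MForm A m) - slotOp A s i c := by
    rw [hu, map_sub, Algebra.algebraMap_eq_smul_one, map_smul, slotOp_one]
  rw [Algebra.algebraMap_eq_smul_one, ← e]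
  exact ⟨⟨_, _, slotOp_mul_eq_one s i (u : A) ((u⁻¹ : Aˣ) : A) (by simp) (by simp),
    slotOp_mul_eq_one s i ((u⁻¹ : Aˣ) : A) (u : A) (by simp) (by simp)⟩, rfl⟩

theorem clm_diff (E F : Type*) [NormedAddCommGroup E] [NormedSpace ℂ E] [NormedAddCommGroup F]
    [NormedSpace ℂ F] (f : E →L[ℂ] F) : Differentiable ℂ (fun x => f x) := f.differentiable

theorem slot_main {A : Type*} [NormedRing A] [NormedAlgebra ℂ A] [CompleteSpace A]
    (m : ℕ) (a : Fin m → A) (N : Set A) (hNo : IsOpen N) (hNne : N.Nonempty)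
    (hN : ∀ x ∈ N, ∃ S : Finset ℂ, S.card < m ∧ ∀ i, ∀ t ∈ spectrum ℂ (a i * x), t ≠ 0 → t ∈ S)
    (x : A) (α : Fin m → ℂ) (hα : ∀ i, α i ∈ spectrum ℂ (a i * x)) (h0 : ∀ i, α i ≠ 0) :
    ¬ Function.Injective α := by
  intro hinj
  choose s φ hφ1 hφ using fun i => exists_side (a i * x) (α i) (hα i)
  obtain ⟨x0, hx0⟩ := hNne
  obtain ⟨ε, hε, hball⟩ := Metric.isOpen_iff.1 hNo x0 hx0
  let F : ℂ → (MForm A m →L[ℂ] MForm A m) := fun μ =>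
    vdm (fun i => slotOp A s i (a i * (μ • x0 + (x - x0))))
  have hF : Differentiable ℂ F := by
    refine vdm_diff (fun i μ => slotOp A s i (a i * (μ • x0 + (x - x0)))) ?_
    intro i
    have h1 : Differentiable ℂ (fun c : A => slotOp A s i c) :=
      clm_diff A (MForm A m →L[ℂ] MForm A m) (slotOp A s i)
    have h2 : Differentiable ℂ (fun μ : ℂ => a i * (μ • x0 + (x - x0))) := by fun_prop
    exact Differentiable.comp (g := fun c : A => slotOp A s i c) h1 h2
  let Φ : MForm A m :=
    (ContinuousMultilinearMap.mkPiAlgebra ℂ (Fin m) ℂ).compContinuousLinearMap φ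
  have hΦ : ∀ v, Φ v = ∏ i, φ i (v i) := fun v => rfl
  have hΦ1 : Φ (fun _ => 1) = 1 := by simp [hΦ, hφ1]
  have hΦ0 : Φ ≠ 0 := by
    intro h
    rw [h] at hΦ1
    simp at hΦ1
  have : Nontrivial (MForm A m) := ⟨Φ, 0, hΦ0⟩
  have heig : ∀ i, slotOp A s i (a i * x) Φ = α i • Φ := by
    intro i
    apply ContinuousMultilinearMap.ext
    intro v
    rw [slotOp_apply, _root_.smul_apply, hΦ, hΦ,
      ← Finset.mul_prod_erase _ _ (Finset.mem_univ i),
      ← Finset.mul_prod_erase (Finset.univ) (fun i => φ i (v i)) (Finset.mem_univ i)]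
    rw [Function.update_self, hφ, smul_eq_mul, mul_assoc]
    congr 2
    apply Finset.prod_congr rfl
    intro j hj
    rw [Function.update_of_ne (Finset.ne_of_mem_erase hj)]
  have hF1 : F 1 Φ = vdm α • Φ := by
    refine vdm_eig _ _ _ ?_
    intro i
    have : (1 : ℂ) • x0 + (x - x0) = x := by simp
    rw [this]
    exact heig i
  have hmem : vdm α ∈ spectrum ℂ (F 1) := by
    rw [spectrum.mem_iff]
    rintro ⟨u, hu⟩
    have h1 : (u : MForm A m →L[ℂ] MForm A m) Φ = 0 := by
      rw [hu, _root_.sub_apply, hF1, Algebra.algebraMap_eq_smul_one]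
      simp
    have h2 : ((↑u⁻¹ * ↑u : MForm A m →L[ℂ] MForm A m)) Φ = 0 := by
      rw [mul_apply_eq_comp, h1, map_zero]
    rw [Units.inv_mul] at h2
    exact hΦ0 h2
  have hne : vdm α ≠ 0 := by
    intro h
    rcases (vdm_eq_zero_iff α).1 h with ⟨i, hi⟩ | h
    · exact h0 i hi
    · exact h hinj
  apply hne
  set R : ℝ := 1 + ‖x - x0‖ / ε with hR
  have hR1 : 1 ≤ R := by
    have : 0 ≤ ‖x - x0‖ / ε := by positivity
    linarith
  refine qn_inside F hF R (by linarith) ?_ 1 (by simpa using hR1) _ hmem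
  intro μ hμ q hq
  have hμ0 : μ ≠ 0 := by
    intro h
    rw [h, norm_zero] at hμ
    linarith
  obtain ⟨t, ht, rfl⟩ := vdm_spectrum _ (slotOp_comm s (fun i => a i * (μ • x0 + (x - x0)))) q hq
  rw [Set.mem_singleton_iff, vdm_eq_zero_iff]
  by_contra hcon
  push Not at hcon
  obtain ⟨ht0, htinj⟩ := hcon
  have hy : x0 + μ⁻¹ • (x - x0) ∈ N := by
    apply hball
    rw [Metric.mem_ball, dist_eq_norm, add_sub_cancel_left, norm_smul, norm_inv, hμ,
      inv_mul_lt_iff₀ (by linarith)]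
    rw [hR, add_mul, div_mul_cancel₀ _ hε.ne']
    linarith
  obtain ⟨S, hS, hS'⟩ := hN _ hy
  have hmemS : ∀ i, μ⁻¹ * t i ∈ S := by
    intro i
    refine hS' i _ ?_ (mul_ne_zero (inv_ne_zero hμ0) (ht0 i))
    have h1 := slotOp_spectrum s i _ _ (ht i)
    have h2 : a i * (μ • x0 + (x - x0)) = (Units.mk0 μ hμ0) • (a i * (x0 + μ⁻¹ • (x - x0))) := by
      rw [Units.smul_mk0, ← mul_smul_comm, smul_add, smul_smul, mul_inv_cancel₀ hμ0, one_smul]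
    rw [h2, spectrum.unit_smul_eq_smul] at h1
    obtain ⟨w, hw, hw'⟩ := h1
    have : t i = μ * w := hw'.symm
    rw [this, ← mul_assoc, inv_mul_cancel₀ hμ0, one_mul]
    exact hw
  have hcard : (Finset.univ : Finset (Fin m)).card ≤ S.card := by
    refine Finset.card_le_card_of_injOn (fun i => μ⁻¹ * t i) (fun i _ => hmemS i) ?_
    intro i _ j _ hij
    exact htinj (mul_left_cancel₀ (inv_ne_zero hμ0) hij)
  simp at hcard
  omega


theorem newburgh {A : Type*} [NormedRing A] [NormedAlgebra ℂ A] [CompleteSpace A] [Nontrivial A]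
    (c : A) (α : ℂ) (hα : α ∈ spectrum ℂ c) (r : ℝ) (hr : 0 < r)
    (hs : ∀ z ∈ Metric.sphere α r, z ∉ spectrum ℂ c) :
    ∀ᶠ c' in nhds c, ∃ z ∈ spectrum ℂ c', z ∈ Metric.ball α r := by
  have hcont : ∀ z ∈ Metric.sphere α r, ContinuousAt
      (fun p : A × ℂ => Ring.inverse (algebraMap ℂ A p.2 - p.1)) (c, z) := by
    intro z hz
    have hu : IsUnit (algebraMap ℂ A z - c) := by
      by_contra hcon
      exact hs z hz (spectrum.mem_iff.2 hcon)
    obtain ⟨u, hu⟩ := hu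
    have h1 := NormedRing.inverse_continuousAt u
    rw [hu] at h1
    have h2 : ContinuousAt (fun p : A × ℂ => algebraMap ℂ A p.2 - p.1) (c, z) := by
      have : Continuous (algebraMap ℂ A) := continuous_algebraMap ℂ A
      fun_prop
    exact ContinuousAt.comp (g := Ring.inverse) (f := fun p : A × ℂ => algebraMap ℂ A p.2 - p.1)
      h1 h2
  obtain ⟨K, hK⟩ : ∃ K : ℝ, ∀ z ∈ Metric.sphere α r,
      ‖Ring.inverse (algebraMap ℂ A z - c)‖ ≤ K := by
    refine (isCompact_sphere α r).exists_bound_of_continuousOn ?_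
    intro z hz
    have h2 : ContinuousAt (fun z : ℂ => (c, z)) z := by fun_prop
    exact (ContinuousAt.comp (f := fun z : ℂ => (c, z)) (hcont z hz) h2).continuousWithinAt
  have hev : ∀ᶠ c' in nhds c, ∀ z ∈ Metric.sphere α r,
      z ∉ spectrum ℂ c' ∧ ‖Ring.inverse (algebraMap ℂ A z - c')‖ < |K| + 1 := by
    refine (isCompact_sphere α r).eventually_forall_of_forall_eventually ?_
    intro z hz
    have e1 : ∀ᶠ p : A × ℂ in nhds (c, z),
        ‖Ring.inverse (algebraMap ℂ A p.2 - p.1)‖ < |K| + 1 := by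
      refine (hcont z hz).norm.eventually_lt continuousAt_const ?_
      have := hK z hz
      have := le_abs_self K
      simp only
      linarith
    have e2 : ∀ᶠ p : A × ℂ in nhds (c, z), IsUnit (algebraMap ℂ A p.2 - p.1) := by
      have h2 : ContinuousAt (fun p : A × ℂ => algebraMap ℂ A p.2 - p.1) (c, z) := by
        have : Continuous (algebraMap ℂ A) := continuous_algebraMap ℂ A
        fun_prop
      refine h2.eventually (Units.isOpen.mem_nhds ?_)
      by_contra hcon
      exact hs z hz (spectrum.mem_iff.2 hcon)
    filter_upwards [e1, e2] with p h1 h2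
    exact ⟨fun h => spectrum.mem_iff.1 h h2, h1⟩
  have hnear : ∀ᶠ c' in nhds c, ‖c' - c‖ < (|K| + 1)⁻¹ := by
    have : ContinuousAt (fun c' : A => ‖c' - c‖) c := by fun_prop
    refine this.eventually_lt continuousAt_const ?_
    simp only [sub_self, norm_zero]
    positivity
  filter_upwards [hev, hnear] with c' h1 h2
  by_contra hcon
  push Not at hcon
  have hunit : ∀ z ∈ Metric.closedBall α r, IsUnit (algebraMap ℂ A z - c') := by
    intro z hz
    by_contra hcon'
    have hz' : z ∈ spectrum ℂ c' := spectrum.mem_iff.2 hcon'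
    rcases (Metric.mem_closedBall.1 hz).lt_or_eq with h | h
    · exact hcon z hz' h
    · exact (h1 z h).1 hz'
  have hd : DiffContOnCl ℂ (fun z : ℂ => Ring.inverse (algebraMap ℂ A z - c'))
      (Metric.ball α r) := by
    refine DifferentiableOn.diffContOnCl_ball (U := Metric.closedBall α r) ?_ subset_rfl
    intro z hz
    obtain ⟨u, hu⟩ := hunit z hz
    have h3 : DifferentiableAt ℂ Ring.inverse (algebraMap ℂ A z - c') := by
      rw [← hu]; exact differentiableAt_inverse ⟨u, rfl⟩
    have h4 : DifferentiableAt ℂ (fun z : ℂ => algebraMap ℂ A z - c') z := by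
      simp only [Algebra.algebraMap_eq_smul_one]
      fun_prop
    exact (DifferentiableAt.comp z (g := Ring.inverse)
      (f := fun z : ℂ => algebraMap ℂ A z - c') h3 h4).differentiableWithinAt
  have hle : ‖Ring.inverse (algebraMap ℂ A α - c')‖ ≤ |K| + 1 := by
    refine Complex.norm_le_of_forall_mem_frontier_norm_le Metric.isBounded_ball hd ?_
      (subset_closure (Metric.mem_ball_self hr))
    intro z hz
    rw [frontier_ball α hr.ne'] at hz
    exact (h1 z hz).2.le
  obtain ⟨u, hu⟩ := hunit α (Metric.mem_closedBall_self hr.le)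
  rw [← hu, Ring.inverse_unit] at hle
  have hpos : 0 < ‖(↑u⁻¹ : A)‖ := norm_pos_iff.2 (Units.ne_zero _)
  have hlt : ‖(algebraMap ℂ A α - c) - u‖ < ‖(↑u⁻¹ : A)‖⁻¹ := by
    rw [hu, sub_sub_sub_cancel_left]
    refine h2.trans_le ?_
    exact inv_anti₀ hpos hle
  exact spectrum.mem_iff.1 hα ⟨Units.ofNearby u _ hlt, rfl⟩

/-- having at least `n` nonzero spectral values -/
def ManySpec {A : Type*} [Ring A] [Algebra ℂ A] (n : ℕ) (c : A) : Prop :=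
  ∃ f : Fin n → ℂ, Function.Injective f ∧ ∀ i, f i ≠ 0 ∧ f i ∈ spectrum ℂ c

theorem manySpec_nhds {A : Type*} [NormedRing A] [NormedAlgebra ℂ A] [CompleteSpace A]
    [Nontrivial A] (n : ℕ) (c : A) (hfin : (spectrum ℂ c).Finite) (h : ManySpec n c) :
    ∀ᶠ c' in nhds c, ManySpec n c' := by
  obtain ⟨f, hinj, hf⟩ := h
  have hr : ∀ᶠ r : ℝ in nhdsWithin 0 (Set.Ioi 0), ∀ i : Fin n, ∀ t ∈ insert 0 (spectrum ℂ c),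
      t ≠ f i → r + r < dist t (f i) := by
    rw [Filter.eventually_all]
    intro i
    rw [(hfin.insert 0).eventually_all]
    intro t _
    by_cases ht : t = f i
    · exact Filter.Eventually.of_forall fun r h => absurd ht h
    · have : ContinuousAt (fun r : ℝ => r + r) 0 := by fun_prop
      have h1 := this.eventually_lt (g := fun _ => dist t (f i)) continuousAt_const
        (by simpa using ht)
      filter_upwards [nhdsWithin_le_nhds h1] with r h _
      exact h
  obtain ⟨r, hr, hr0⟩ := (hr.and self_mem_nhdsWithin).exists
  have hr0 : 0 < r := hr0
  have hev : ∀ᶠ c' in nhds c, ∀ i : Fin n, ∃ z ∈ spectrum ℂ c', z ∈ Metric.ball (f i) r := by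
    rw [Filter.eventually_all]
    intro i
    refine newburgh c (f i) (hf i).2 r hr0 ?_
    intro z hz hzs
    have hz' : dist z (f i) = r := hz
    have := hr i z (Set.mem_insert_of_mem _ hzs) (by
      rintro rfl
      rw [dist_self] at hz'
      linarith)
    linarith
  filter_upwards [hev] with c' hc'
  choose g hg hgb using hc'
  refine ⟨g, ?_, fun i => ⟨?_, hg i⟩⟩
  · intro i j hij
    by_contra hne
    have h1 := hr i (f j) (Set.mem_insert_of_mem _ (hf j).2) (fun h => hne (hinj h.symm))
    have h2 : dist (g i) (f i) < r := hgb i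
    have h3 : dist (g j) (f j) < r := hgb j
    rw [← hij] at h3
    have := dist_triangle_left (f j) (f i) (g i)
    linarith
  · intro h0
    have h1 := hr i 0 (Set.mem_insert _ _) (hf i).1.symm
    have h2 : dist (g i) (f i) < r := hgb i
    rw [h0] at h2
    linarith

theorem not_manySpec_of_finset {A : Type*} [Ring A] [Algebra ℂ A] (n : ℕ) (c : A)
    (S : Finset ℂ) (hS : S.card < n) (h : ∀ t ∈ spectrum ℂ c, t ≠ 0 → t ∈ S) :
    ¬ ManySpec n c := by
  rintro ⟨f, hf, hf'⟩
  have hcard : (Finset.univ : Finset (Fin n)).card ≤ S.card :=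
    Finset.card_le_card_of_injOn f (fun i _ => h _ (hf' i).2 (hf' i).1) (fun i _ j _ hij => hf hij)
  simp at hcard
  omega

theorem finset_of_not_manySpec {A : Type*} [Ring A] [Algebra ℂ A] (n : ℕ) (c : A)
    (h : ¬ ManySpec n c) : ∃ S : Finset ℂ, S.card < n ∧ ∀ t ∈ spectrum ℂ c, t ≠ 0 → t ∈ S := by
  have key : ∀ T : Finset ℂ, (T : Set ℂ) ⊆ spectrum ℂ c \ {0} → T.card < n := by
    intro T hT
    by_contra hcon
    push Not at hcon
    obtain ⟨T', hT', hc⟩ := Finset.exists_subset_card_eq hcon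
    apply h
    let e := (T'.equivFinOfCardEq hc).symm
    refine ⟨fun i => (e i : ℂ), fun i j hij => e.injective (Subtype.ext hij), fun i => ?_⟩
    have := hT (hT' (e i).2)
    exact ⟨this.2, this.1⟩
  have hfin : (spectrum ℂ c \ {0}).Finite := by
    by_contra hinf
    obtain ⟨T, hT, hc⟩ := Set.Infinite.exists_subset_card_eq hinf n
    have := key T hT
    omega
  exact ⟨hfin.toFinset, key _ (by simp), fun t ht h0 => by simp [ht, h0]⟩

theorem baire_step {A : Type*} [NormedRing A] [NormedAlgebra ℂ A] [CompleteSpace A]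
    [Nontrivial A] (a : A) (N : Set A) (hN : IsOpen N) (hNne : N.Nonempty)
    (h : ∀ x ∈ N, (spectrum ℂ (a * x)).Finite) : ∃ n, ∀ x, ¬ ManySpec n (a * x) := by
  let G : ℕ → Set A := fun n => {x | x ∈ N ∧ ManySpec n (a * x)}
  have hG : ∀ n, IsOpen (G n) := by
    intro n
    rw [isOpen_iff_mem_nhds]
    rintro x ⟨hx, hm⟩
    have h1 := manySpec_nhds n _ (h x hx) hm
    have h2 : ContinuousAt (fun x => a * x) x := by fun_prop
    filter_upwards [hN.mem_nhds hx, h2.eventually h1] with y hy hy'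
    exact ⟨hy, hy'⟩
  have hU : (⋃ n, (G n)ᶜ) = Set.univ := by
    rw [Set.eq_univ_iff_forall]
    intro x
    rw [Set.mem_iUnion]
    by_cases hx : x ∈ N
    · refine ⟨(h x hx).toFinset.card + 1, fun hg => ?_⟩
      refine not_manySpec_of_finset _ _ (h x hx).toFinset (Nat.lt_succ_self _) ?_ hg.2
      intro t ht _
      simpa using ht
    · exact ⟨0, fun hg => hx hg.1⟩
  have hd := dense_iUnion_interior_of_closed (fun n => (hG n).isClosed_compl) hU
  obtain ⟨y, hyN, hy⟩ := hd.exists_mem_open hN hNne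
  rw [Set.mem_iUnion] at hyN
  obtain ⟨n, hn⟩ := hyN
  refine ⟨n, fun x => ?_⟩
  rintro ⟨f, hf, hf'⟩
  refine slot_main n (fun _ => a) (N ∩ interior (G n)ᶜ) (hN.inter isOpen_interior) ⟨y, hy, hn⟩ ?_
    x f (fun i => (hf' i).2) (fun i => (hf' i).1) hf
  rintro z ⟨hz, hz'⟩
  have h1 : ¬ ManySpec n (a * z) := fun hm => interior_subset hz' ⟨hz, hm⟩
  obtain ⟨S, hS, hS'⟩ := finset_of_not_manySpec n _ h1
  exact ⟨S, hS, fun _ => hS'⟩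

theorem rank_step {A : Type*} [NormedRing A] [NormedAlgebra ℂ A] [CompleteSpace A]
    [Nontrivial A] (a b : A) (N : Set A) (hN : IsOpen N) (hNne : N.Nonempty)
    (h : ∀ x ∈ N, (spectrum ℂ (a * x)).Finite ∧ (spectrum ℂ (b * x)).Finite ∧
      spectrum ℂ (a * x) = spectrum ℂ (b * x)) :
    ∃ k : ℕ, (∀ x, ¬ ManySpec (k + 1) (x * a)) ∧
      (∀ x, ∀ f : Fin k → ℂ, Function.Injective f → (∀ i, f i ≠ 0) →
        (∀ i, f i ∈ spectrum ℂ (x * a)) → ∀ γ ∈ spectrum ℂ (x * b), γ ≠ 0 → ∃ i, γ = f i) ∧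
      (∃ x, ∃ f : Fin k → ℂ, Function.Injective f ∧ (∀ i, f i ≠ 0) ∧
        (∀ i, f i ∈ spectrum ℂ (x * a)) ∧ (∀ i, f i ∈ spectrum ℂ (x * b))) := by
  have comm : ∀ (c x : A) (t : ℂ), t ≠ 0 → (t ∈ spectrum ℂ (x * c) ↔ t ∈ spectrum ℂ (c * x)) := by
    intro c x t ht
    exact spectrum.unit_mem_mul_comm (r := Units.mk0 t ht)
  obtain ⟨n0, hn0⟩ := baire_step a N hN hNne (fun x hx => (h x hx).1)
  classical
  have hex : ∃ n, ∀ x ∈ N, ¬ ManySpec n (a * x) := ⟨n0, fun x _ => hn0 x⟩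
  have hspec := Nat.find_spec hex
  have hmin := fun m => Nat.find_min hex (m := m)
  generalize Nat.find hex = n at hspec hmin
  obtain ⟨x0, hx0⟩ := hNne
  have hn : n ≠ 0 := by
    rintro rfl
    exact hspec x0 hx0 ⟨fun i => i.elim0, fun i => i.elim0, fun i => i.elim0⟩
  obtain ⟨k, rfl⟩ := Nat.exists_eq_succ_of_ne_zero hn
  have hS : ∀ x ∈ N, ∃ S : Finset ℂ, S.card < k + 1 ∧
      ∀ t ∈ spectrum ℂ (a * x), t ≠ 0 → t ∈ S := fun x hx => finset_of_not_manySpec _ _ (hspec x hx)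
  refine ⟨k, ?_, ?_, ?_⟩
  · rintro x ⟨f, hf, hf'⟩
    refine slot_main (k + 1) (fun _ => a) N hN ⟨x0, hx0⟩ ?_ x f
      (fun i => (comm _ _ _ (hf' i).1).1 (hf' i).2) (fun i => (hf' i).1) hf
    intro z hz
    obtain ⟨S, h1, h2⟩ := hS z hz
    exact ⟨S, h1, fun _ => h2⟩
  · intro x f hf hf0 hfs γ hγ hγ0
    by_contra hcon
    push Not at hcon
    refine slot_main (k + 1) (Fin.cons b (fun _ => a)) N hN ⟨x0, hx0⟩ ?_ x (Fin.cons γ f)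
      ?_ ?_ ?_
    · intro z hz
      obtain ⟨S, h1, h2⟩ := hS z hz
      refine ⟨S, h1, fun i => ?_⟩
      refine Fin.cases ?_ (fun j => ?_) i
      · rw [Fin.cons_zero, ← (h z hz).2.2]
        exact h2
      · rw [Fin.cons_succ]
        exact h2
    · intro i
      refine Fin.cases ?_ (fun j => ?_) i
      · exact (comm _ _ _ hγ0).1 hγ
      · exact (comm _ _ _ (hf0 j)).1 (hfs j)
    · intro i
      refine Fin.cases ?_ (fun j => ?_) i
      · exact hγ0
      · exact hf0 j
    · rw [Fin.cons_injective_iff]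
      refine ⟨?_, hf⟩
      rintro ⟨i, hi⟩
      exact hcon i hi.symm
  · have := hmin k (Nat.lt_succ_self k)
    push Not at this
    obtain ⟨x, hx, f, hf, hf'⟩ := this
    refine ⟨x, f, hf, fun i => (hf' i).1, fun i => (comm _ _ _ (hf' i).1).2 (hf' i).2,
      fun i => (comm _ _ _ (hf' i).1).2 ?_⟩
    rw [← (h x hx).2.2]
    exact (hf' i).2


universe u v

theorem mem_spectrum_of_eig {A : Type u} [Ring A] [Algebra ℂ A] {M : Type v} [AddCommGroup M]
    [Module A M] [Module ℂ M] [IsScalarTower ℂ A M] (t : A) (γ : ℂ) (w : M) (hw : w ≠ 0)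
    (h : t • w = γ • w) : γ ∈ spectrum ℂ t := by
  rw [spectrum.mem_iff]
  rintro ⟨u, hu⟩
  apply hw
  have h1 : (u : A) • w = 0 := by
    rw [hu, sub_smul, h, algebraMap_smul, sub_self]
  have h2 : ((↑u⁻¹ : A) * (u : A)) • w = 0 := by rw [mul_smul, h1, smul_zero]
  rwa [Units.inv_mul, one_smul] at h2

theorem mem_spectrum_of_left {A : Type u} [Ring A] [Algebra ℂ A] (t s : A) (γ : ℂ) (hs : s ≠ 0)
    (h : s * t = γ • s) : γ ∈ spectrum ℂ t := by
  rw [spectrum.mem_iff]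
  rintro ⟨u, hu⟩
  apply hs
  have h1 : s * (u : A) = 0 := by
    rw [hu, mul_sub, h, ← Algebra.commutes, Algebra.smul_def, sub_self]
  have h2 : s * ((u : A) * (↑u⁻¹ : A)) = 0 := by rw [← mul_assoc, h1, zero_mul]
  rwa [Units.mul_inv, mul_one] at h2

theorem aeval_eig {A : Type u} [Ring A] [Algebra ℂ A] {M : Type v} [AddCommGroup M]
    [Module A M] [Module ℂ M] [IsScalarTower ℂ A M] (t : A) (γ : ℂ) (w : M)
    (h : t • w = γ • w) (p : Polynomial ℂ) : (Polynomial.aeval t p) • w = p.eval γ • w := by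
  have hpow : ∀ n : ℕ, t ^ n • w = γ ^ n • w := by
    intro n
    induction n with
    | zero => simp
    | succ n ih => rw [pow_succ, mul_smul, h, smul_comm, ih, smul_smul, pow_succ, mul_comm]
  induction p using Polynomial.induction_on' with
  | add p q hp hq => rw [map_add, add_smul, hp, hq, Polynomial.eval_add, add_smul]
  | monomial n c =>
    rw [Polynomial.aeval_monomial, mul_smul, hpow, algebraMap_smul, Polynomial.eval_monomial,
      smul_smul]

theorem simple_exists {A : Type u} [Ring A] {M : Type v} [AddCommGroup M] [Module A M]
    [IsSimpleModule A M] (e : M) (he : e ≠ 0) (m : M) : ∃ h : A, h • e = m := by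
  obtain ⟨h, hh⟩ := IsSimpleModule.toSpanSingleton_surjective A he m
  exact ⟨h, by simpa using hh⟩

/-- simple quotients separate points -/
def SepSimple (A : Type u) [Ring A] : Prop :=
  ∀ t : A, t ≠ 0 → ∃ L : Submodule A A, IsCoatom L ∧ ∃ ξ : A ⧸ L, t • ξ ≠ 0

theorem kills {A : Type u} [Ring A] (hss : SepSimple A) {M : Type v} [AddCommGroup M] [Module A M]
    (e : M) (t : A) (h1 : ∀ h : A, h • e = 0 → h * t = 0) (h2 : ∀ ξ : M, t • ξ = 0) : t = 0 := by
  by_contra ht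
  obtain ⟨L, hL, ξ, hξ⟩ := hss t ht
  have := isSimpleModule_iff_isCoatom.2 hL
  obtain ⟨s, hs⟩ := simple_exists (A := A) _ hξ ξ
  have h3 : (t * s) * t = 0 := h1 _ (by rw [mul_smul, h2])
  apply hξ
  have h4 : ((t * s) * t) • ξ = 0 := by rw [h3, zero_smul]
  rwa [mul_smul, mul_smul, hs] at h4

theorem avoid {s : Set ℂ} (hs : s.Finite) : ∃ z : ℂ, z ∉ s := hs.exists_notMem

theorem I_lemma {A : Type u} [Ring A] [Algebra ℂ A] (hss : SepSimple A) (k : ℕ) (a b x : A)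
    (α : Fin k → ℂ) (hinj : Function.Injective α) (h0 : ∀ i, α i ≠ 0)
    (M : Fin k → Type v) [∀ i, AddCommGroup (M i)] [∀ i, Module A (M i)] [∀ i, Module ℂ (M i)]
    [∀ i, IsScalarTower ℂ A (M i)]
    (w : ∀ i, M i) (hw : ∀ i, w i ≠ 0) (hxa : ∀ i, (x * a) • w i = α i • w i)
    (HA : ∀ x, ¬ ManySpec (k + 1) (x * a))
    (HB : ∀ x, ∀ f : Fin k → ℂ, Function.Injective f → (∀ i, f i ≠ 0) →
        (∀ i, f i ∈ spectrum ℂ (x * a)) → ∀ γ ∈ spectrum ℂ (x * b), γ ≠ 0 → ∃ i, γ = f i)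
    (g : A) (hg : ∀ i, g • a • w i = 0) : g * a = 0 ∧ g * b = 0 := by
  obtain ⟨γ, hγ⟩ := avoid ((Set.finite_range α).insert 0)
  rw [Set.mem_insert_iff, not_or] at hγ
  have hmem : ∀ h : A, ∀ i, α i ∈ spectrum ℂ ((x + h * g) * a) := by
    intro h i
    refine mem_spectrum_of_eig _ _ (w i) (hw i) ?_
    rw [add_mul, add_smul, hxa, mul_assoc, mul_smul, mul_smul, hg, smul_zero, add_zero]
  have hγc : ∀ c : A, g * c ≠ 0 → ∃ h : A, γ ∈ spectrum ℂ ((x + h * g) * c) := by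
    intro c hc
    obtain ⟨L, hL, ξ, hξ⟩ := hss _ hc
    have := isSimpleModule_iff_isCoatom.2 hL
    obtain ⟨h, hh⟩ := simple_exists (A := A) _ hξ (γ • ξ - (x * c) • ξ)
    refine ⟨h, mem_spectrum_of_eig _ _ ξ ?_ ?_⟩
    · rintro rfl
      exact hξ (smul_zero _)
    · rw [add_mul, add_smul, mul_assoc h, mul_smul h, hh]
      abel
  constructor
  · by_contra hc
    obtain ⟨h, hh⟩ := hγc a hc
    refine HA (x + h * g) ⟨Fin.cons γ α, ?_, ?_⟩
    · rw [Fin.cons_injective_iff]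
      exact ⟨hγ.2, hinj⟩
    · intro i
      refine Fin.cases ?_ (fun j => ?_) i
      · exact ⟨hγ.1, hh⟩
      · exact ⟨h0 j, hmem h j⟩
  · by_contra hc
    obtain ⟨h, hh⟩ := hγc b hc
    obtain ⟨i, hi⟩ := HB _ α hinj h0 (hmem h) γ hh hγ.1
    exact hγ.2 ⟨i, hi.symm⟩

theorem z_lemma {A : Type u} [Ring A] [Algebra ℂ A] (hss : SepSimple A) (k : ℕ) (a b x : A)
    (α : Fin k → ℂ) (hinj : Function.Injective α) (h0 : ∀ i, α i ≠ 0)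
    (M : Fin k → Type v) [∀ i, AddCommGroup (M i)] [∀ i, Module A (M i)] [∀ i, Module ℂ (M i)]
    [∀ i, IsScalarTower ℂ A (M i)] [∀ i, IsSimpleModule A (M i)]
    (hschur : ∀ i, ∀ e v : M i, e ≠ 0 → (∀ h : A, h • e = 0 → h • v = 0) → ∃ c : ℂ, v = c • e)
    (w : ∀ i, M i) (hw : ∀ i, w i ≠ 0) (hxa : ∀ i, (x * a) • w i = α i • w i)
    (HA : ∀ x, ¬ ManySpec (k + 1) (x * a))
    (HB : ∀ x, ∀ f : Fin k → ℂ, Function.Injective f → (∀ i, f i ≠ 0) →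
        (∀ i, f i ∈ spectrum ℂ (x * a)) → ∀ γ ∈ spectrum ℂ (x * b), γ ≠ 0 → ∃ i, γ = f i)
    (hxb : ∀ i, α i ∈ spectrum ℂ (x * b))
    (i : Fin k) (z : A) (hzi : z • a • w i = a • w i) (hzj : ∀ j, j ≠ i → z • a • w j = 0) :
    z * a = z * b := by
  have I := I_lemma hss k a b x α hinj h0 M w hw hxa HA HB
  set e : M i := a • w i with he
  have he0 : e ≠ 0 := by
    intro h
    have := hxa i
    rw [mul_smul, ← he, h, smul_zero] at this
    exact smul_ne_zero (h0 i) (hw i) this.symm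
  -- elements vanishing on `e` times `z`
  have K : ∀ h : A, h • e = 0 → h * (z * a) = 0 ∧ h * (z * b) = 0 := by
    intro h hh
    rw [← mul_assoc, ← mul_assoc]
    apply I
    intro j
    by_cases hj : j = i
    · subst hj
      rw [mul_smul, hzi, hh]
    · rw [mul_smul, hzj j hj, smul_zero]
  have Ea : ∀ ξ : M i, ∃ c : ℂ, (z * a) • ξ = c • e := fun ξ =>
    hschur i e _ he0 fun h hh => by rw [← mul_smul, (K h hh).1, zero_smul]
  have Eb : ∀ ξ : M i, ∃ c : ℂ, (z * b) • ξ = c • e := fun ξ =>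
    hschur i e _ he0 fun h hh => by rw [← mul_smul, (K h hh).2, zero_smul]
  choose φa hφa using Ea
  choose φb hφb using Eb
  have inj : Function.Injective (fun c : ℂ => c • e) := smul_left_injective ℂ he0
  have adda : ∀ ξ η (c : ℂ), φa (ξ + c • η) = φa ξ + c * φa η := by
    intro ξ η c
    apply inj
    simp only
    rw [← hφa, add_smul, mul_smul c, ← hφa, ← hφa, smul_add, smul_comm]
  have addb : ∀ ξ η (c : ℂ), φb (ξ + c • η) = φb ξ + c * φb η := by
    intro ξ η c
    apply inj
    simp only
    rw [← hφb, add_smul, mul_smul c, ← hφb, ← hφb, smul_add, smul_comm]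
  have zeroa : φa 0 = 0 := by
    apply inj
    simp only
    rw [← hφa, smul_zero, zero_smul]
  have hφw : φa (w i) = 1 := by
    apply inj
    simp only
    rw [← hφa, mul_smul, one_smul]
    exact hzi
  have hza : z * a ≠ 0 := by
    intro h
    have h1 := hφa (w i)
    rw [h, zero_smul, hφw, one_smul] at h1
    exact he0 h1.symm
  -- perturbation
  have Q : ∀ h : A, α i + φa (h • e) ≠ 0 → (∀ j, j ≠ i → α i + φa (h • e) ≠ α j) →
      ∀ γ ∈ spectrum ℂ ((x + h * z) * b), γ ≠ 0 → γ = α i + φa (h • e) ∨ ∃ j, γ = α j ∧ j ≠ i := by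
    intro h hμ0 hμj γ hγ hγ0
    set μ := α i + φa (h • e) with hμ
    have hspec : ∀ j, Function.update α i μ j ∈ spectrum ℂ ((x + h * z) * a) := by
      intro j
      by_cases hj : j = i
      · subst hj
        rw [Function.update_self]
        refine mem_spectrum_of_left _ (z * a) _ hza ?_
        have e1 : (z * a * x - α j • z) * a = 0 := by
          refine (I _ ?_).1
          intro l
          have hl : (z * a * x) • a • w l = α l • z • a • w l := by
            rw [mul_assoc, mul_smul, mul_smul, ← mul_smul x, hxa, smul_comm a, smul_comm z]
          rw [sub_smul, hl, smul_assoc]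
          by_cases hlj : l = j
          · subst hlj
            rw [sub_self]
          · rw [hzj l hlj, smul_zero, smul_zero, sub_self]
        have e2 : (z * a * h * z - φa (h • e) • z) * a = 0 := by
          refine (I _ ?_).1
          intro l
          by_cases hlj : l = j
          · subst hlj
            rw [sub_smul, mul_smul, hzi, mul_smul, hφa, smul_assoc, hzi, sub_self]
          · rw [sub_smul, mul_smul, smul_assoc, hzj l hlj, smul_zero, smul_zero, sub_self]
        rw [sub_mul, sub_eq_zero] at e1 e2
        have : z * a * ((x + h * z) * a) = z * a * x * a + z * a * h * z * a := by noncomm_ring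
        rw [this, e1, e2, ← add_mul, ← add_smul, smul_mul_assoc]
      · rw [Function.update_of_ne hj]
        refine mem_spectrum_of_eig _ _ (w j) (hw j) ?_
        rw [add_mul, add_smul, hxa, mul_assoc, mul_smul, mul_smul, hzj j hj, smul_zero, add_zero]
    have hne0 : ∀ j, Function.update α i μ j ≠ 0 := by
      intro j
      by_cases hj : j = i
      · subst hj
        rwa [Function.update_self]
      · rw [Function.update_of_ne hj]
        exact h0 j
    have hinj' : Function.Injective (Function.update α i μ) := by
      intro j l hjl
      by_cases hj : j = i
      · by_cases hl : l = i
        · rw [hj, hl]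
        · rw [hj, Function.update_self, Function.update_of_ne hl] at hjl
          exact absurd hjl (hμj l hl)
      · by_cases hl : l = i
        · rw [hl, Function.update_self, Function.update_of_ne hj] at hjl
          exact absurd hjl.symm (hμj j hj)
        · rw [Function.update_of_ne hj, Function.update_of_ne hl] at hjl
          exact hinj hjl
    obtain ⟨j, hj⟩ := HB _ _ hinj' hne0 hspec γ hγ hγ0
    by_cases hji : j = i
    · subst hji
      rw [Function.update_self] at hj
      exact Or.inl hj
    · rw [Function.update_of_ne hji] at hj
      exact Or.inr ⟨j, hj, hji⟩
  -- Claim 1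
  have C1 : ∀ ξ, φa ξ ≠ 0 → φb ξ ≠ 0 → φa ξ = φb ξ := by
    intro ξ ha hb
    by_contra hne
    have hξ : ξ ≠ 0 := by
      rintro rfl
      exact ha zeroa
    set τ := α i - (φb ξ)⁻¹ * φa ((x * b) • ξ) with hτ
    set ρ := φa ξ / φb ξ with hρ
    have hρ0 : ρ ≠ 0 := div_ne_zero ha hb
    have hρ1 : 1 - ρ ≠ 0 := by
      intro h
      apply hne
      have : ρ = 1 := by linear_combination -h
      rwa [hρ, div_eq_one_iff_eq hb] at this
    have hB : (insert 0 (Set.range α)).Finite := (Set.finite_range α).insert 0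
    obtain ⟨γ, hγ⟩ := avoid ((hB.union ((hB.preimage (f := fun γ => ρ * γ + τ)
      (fun p _ q _ hpq => mul_left_cancel₀ hρ0 (add_right_cancel hpq))))).union
        (Set.finite_singleton (τ / (1 - ρ))))
    simp only [Set.mem_union, not_or, Set.mem_preimage, Set.mem_insert_iff, Set.mem_range,
      not_exists, Set.mem_singleton_iff] at hγ
    obtain ⟨⟨⟨g1, g2⟩, g3, g4⟩, g5⟩ := hγ
    obtain ⟨h, hh⟩ := simple_exists (A := A) e he0 ((0 : M i) + (φb ξ)⁻¹ • ((0 + γ • ξ) + (-1 : ℂ) • ((x * b) • ξ)))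
    have hμ : α i + φa (h • e) = ρ * γ + τ := by
      rw [hh, adda, adda, adda, zeroa, hτ, hρ]
      field_simp
      ring
    rcases Q h (by rw [hμ]; exact g3) (by rw [hμ]; exact fun j _ hj => g4 j hj.symm) γ
      (mem_spectrum_of_eig _ _ ξ hξ (by
        rw [add_mul, add_smul, mul_assoc, mul_smul h, hφb, smul_comm, hh, zero_add, smul_smul,
          mul_inv_cancel₀ hb, one_smul, zero_add, neg_one_smul]
        abel)) g1 with h1 | ⟨j, hj, -⟩
    · rw [hμ] at h1
      apply g5
      rw [eq_div_iff hρ1]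
      linear_combination h1
    · exact g2 j hj.symm
  -- Claim 2
  have C2 : ∃ ξ, φb ξ ≠ 0 := by
    by_contra hcon
    push Not at hcon
    have hzb : z * b = 0 := by
      refine kills hss e _ (fun h hh => (K h hh).2) (fun ξ => ?_)
      rw [hφb, hcon, zero_smul]
    obtain ⟨s, hs⟩ := avoid (((Set.finite_range α).insert 0).preimage (f := fun s => α i + s)
      (fun p _ q _ hpq => add_left_cancel hpq))
    simp only [not_or, Set.mem_preimage, Set.mem_insert_iff, Set.mem_range, not_exists] at hs
    obtain ⟨h, hh⟩ := simple_exists (A := A) e he0 (0 + s • w i)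
    have hμ : α i + φa (h • e) = α i + s := by
      rw [hh, adda, zeroa, hφw]
      ring
    rcases Q h (by rw [hμ]; exact hs.1) (by rw [hμ]; exact fun j _ hj => hs.2 j hj.symm) (α i)
      (by
        rw [add_mul, mul_assoc, hzb, mul_zero, add_zero]
        exact hxb i) (h0 i) with h1 | ⟨j, hj, hji⟩
    · rw [hμ] at h1
      exact hs.2 i h1
    · exact hji (hinj hj.symm)
  -- Claim 3
  obtain ⟨ζ, hζa, hζb⟩ : ∃ ζ, φa ζ ≠ 0 ∧ φb ζ ≠ 0 := by
    obtain ⟨ξ, hξ⟩ := C2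
    by_cases h1 : φa ξ = 0
    · by_cases h2 : φb (w i) = 0
      · refine ⟨ξ + (1 : ℂ) • w i, ?_, ?_⟩
        · rw [adda, h1, hφw]
          norm_num
        · rw [addb, h2]
          simpa using hξ
      · exact ⟨w i, by rw [hφw]; exact one_ne_zero, h2⟩
    · exact ⟨ξ, h1, hξ⟩
  have hζ := C1 ζ hζa hζb
  have C3 : ∀ ξ, φa ξ = φb ξ := by
    intro ξ
    obtain ⟨s, hs⟩ := avoid ((Set.finite_singleton (-φa ξ / φa ζ)).insert (-φb ξ / φb ζ))
    simp only [Set.mem_insert_iff, Set.mem_singleton_iff, not_or] at hs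
    have h1 : φa (ξ + s • ζ) ≠ 0 := by
      rw [adda]
      intro h
      apply hs.2
      rw [eq_div_iff hζa]
      linear_combination h
    have h2 : φb (ξ + s • ζ) ≠ 0 := by
      rw [addb]
      intro h
      apply hs.1
      rw [eq_div_iff hζb]
      linear_combination h
    have h3 := C1 _ h1 h2
    rw [adda, addb, hζ] at h3
    exact add_right_cancel h3
  rw [← sub_eq_zero]
  refine kills hss e _ (fun h hh => ?_) (fun ξ => ?_)
  · rw [mul_sub, (K h hh).1, (K h hh).2, sub_zero]
  · rw [sub_smul, hφa, hφb, C3, sub_self]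

theorem alg_final {A : Type u} [Ring A] [Algebra ℂ A] (hss : SepSimple A) (k : ℕ) (a b x : A)
    (α : Fin k → ℂ) (hinj : Function.Injective α) (h0 : ∀ i, α i ≠ 0)
    (M : Fin k → Type v) [∀ i, AddCommGroup (M i)] [∀ i, Module A (M i)] [∀ i, Module ℂ (M i)]
    [∀ i, IsScalarTower ℂ A (M i)] [∀ i, IsSimpleModule A (M i)]
    (hschur : ∀ i, ∀ e v : M i, e ≠ 0 → (∀ h : A, h • e = 0 → h • v = 0) → ∃ c : ℂ, v = c • e)
    (w : ∀ i, M i) (hw : ∀ i, w i ≠ 0) (hxa : ∀ i, (x * a) • w i = α i • w i)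
    (HA : ∀ x, ¬ ManySpec (k + 1) (x * a))
    (HB : ∀ x, ∀ f : Fin k → ℂ, Function.Injective f → (∀ i, f i ≠ 0) →
        (∀ i, f i ∈ spectrum ℂ (x * a)) → ∀ γ ∈ spectrum ℂ (x * b), γ ≠ 0 → ∃ i, γ = f i)
    (hxb : ∀ i, α i ∈ spectrum ℂ (x * b)) : a = b := by
  let z : Fin k → A := fun i => Polynomial.aeval (a * x) (Lagrange.basis Finset.univ α i)
  have hax : ∀ i, (a * x) • a • w i = α i • a • w i := by
    intro i
    rw [← mul_smul, mul_assoc, mul_smul, hxa, smul_comm]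
  have hzi : ∀ i, z i • a • w i = a • w i := by
    intro i
    rw [aeval_eig _ _ _ (hax i), Lagrange.eval_basis_self hinj.injOn (Finset.mem_univ i), one_smul]
  have hzj : ∀ i j, j ≠ i → z i • a • w j = 0 := by
    intro i j hj
    rw [aeval_eig _ _ _ (hax j), Lagrange.eval_basis_of_ne hj.symm (Finset.mem_univ j), zero_smul]
  have hz : ∀ i, z i * a = z i * b := fun i =>
    z_lemma hss k a b x α hinj h0 M hschur w hw hxa HA HB hxb i (z i) (hzi i) (hzj i)
  have h1 := I_lemma hss k a b x α hinj h0 M w hw hxa HA HB (1 - ∑ i, z i) (by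
    intro j
    rw [sub_smul, one_smul, Finset.sum_smul, Finset.sum_eq_single j (fun i _ hi => hzj i j hi.symm)
      (by simp), hzi, sub_self])
  rw [sub_mul, sub_mul, sub_eq_zero, sub_eq_zero, one_mul, one_mul, Finset.sum_mul,
    Finset.sum_mul] at h1
  rw [h1.1, h1.2]
  exact Finset.sum_congr rfl fun i _ => hz i


theorem schur_quot {A : Type*} [NormedRing A] [NormedAlgebra ℂ A] [CompleteSpace A]
    (L : Submodule A A) (hL : IsCoatom L) (e v : A ⧸ L) (he : e ≠ 0)
    (h : ∀ h : A, h • e = 0 → h • v = 0) : ∃ c : ℂ, v = c • e := by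
  have hmax : Ideal.IsMaximal L := ⟨hL⟩
  have hcl : IsClosed (L : Set A) := Ideal.IsMaximal.isClosed (I := L)
  have hsimp : IsSimpleModule A (A ⧸ L) := isSimpleModule_iff_isCoatom.2 hL
  have : Nontrivial (A ⧸ L) := ⟨e, 0, he⟩
  obtain ⟨T, hT⟩ : ∃ T : (A ⧸ L) →ₗ[A] (A ⧸ L), T e = v := by
    have hs := IsSimpleModule.toSpanSingleton_surjective A he
    let E := (LinearMap.toSpanSingleton A (A ⧸ L) e).quotKerEquivOfSurjective hs
    let G := (LinearMap.ker (LinearMap.toSpanSingleton A (A ⧸ L) e)).liftQ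
      (LinearMap.toSpanSingleton A (A ⧸ L) v) (by
        intro t ht
        simp only [LinearMap.mem_ker, LinearMap.toSpanSingleton_apply] at ht ⊢
        exact h t ht)
    refine ⟨G.comp E.symm.toLinearMap, ?_⟩
    have h1 : E.symm e = Submodule.Quotient.mk 1 := by
      rw [LinearEquiv.symm_apply_eq]
      simp [E]
    simp only [LinearMap.comp_apply, LinearEquiv.coe_coe, h1]
    simp [G]
  obtain ⟨p, hp⟩ := Submodule.Quotient.mk_surjective L (T (Submodule.Quotient.mk 1))
  have hTc : Continuous (T.restrictScalars ℂ) := by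
    have hq : Topology.IsQuotientMap (Submodule.Quotient.mk : A → A ⧸ L) := isQuotientMap_quot_mk
    rw [hq.continuous_iff]
    have : ((T.restrictScalars ℂ : A ⧸ L →ₗ[ℂ] A ⧸ L) ∘ (Submodule.Quotient.mk : A → A ⧸ L)) =
        fun t => (Submodule.Quotient.mk (t * p) : A ⧸ L) := by
      funext t
      have h1 : (Submodule.Quotient.mk t : A ⧸ L) = t • Submodule.Quotient.mk 1 := by
        rw [← Submodule.Quotient.mk_smul, smul_eq_mul, mul_one]
      have h2 : (Submodule.Quotient.mk (t * p) : A ⧸ L) = t • Submodule.Quotient.mk p := by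
        rw [← Submodule.Quotient.mk_smul, smul_eq_mul]
      rw [Function.comp_apply, LinearMap.restrictScalars_apply, h1, map_smul, h2, hp]
    rw [this]
    exact hq.continuous.comp (by fun_prop)
  let T' : (A ⧸ L) →L[ℂ] (A ⧸ L) := ⟨T.restrictScalars ℂ, hTc⟩
  obtain ⟨c, hc⟩ := spectrum.nonempty T'
  refine ⟨c, ?_⟩
  let S : (A ⧸ L) →ₗ[A] (A ⧸ L) := c • LinearMap.id - T
  rcases LinearMap.bijective_or_eq_zero S with hb | h0
  · exfalso
    rw [spectrum.mem_iff] at hc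
    apply hc
    rw [ContinuousLinearMap.isUnit_iff_bijective]
    convert hb using 1
    funext ξ
    simp [S, T', Algebra.algebraMap_eq_smul_one]
  · have h1 : S e = 0 := by rw [h0]; rfl
    have h2 : S e = c • e - v := by simp [S, hT]
    rw [h2, sub_eq_zero] at h1
    exact h1.symm

theorem sepSimple {A : Type*} [Ring A]
    (hss : TwoSidedIdeal.jacobson (⊥ : TwoSidedIdeal A) = ⊥) : SepSimple A := by
  intro t ht
  by_contra hcon
  push Not at hcon
  apply ht
  have : t ∈ TwoSidedIdeal.jacobson (⊥ : TwoSidedIdeal A) := by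
    rw [TwoSidedIdeal.mem_jacobson_iff]
    have h2 : t ∈ Ideal.jacobson (⊥ : Ideal A) := by
      rw [Ideal.jacobson, Submodule.mem_sInf]
      rintro J ⟨-, hJ⟩
      have h1 := hcon J hJ.out (Submodule.Quotient.mk 1)
      rw [← Submodule.Quotient.mk_smul, smul_eq_mul, mul_one, Submodule.Quotient.mk_eq_zero] at h1
      exact h1
    rw [Ideal.mem_jacobson_iff] at h2
    intro y
    obtain ⟨z, hz⟩ := h2 y
    refine ⟨z, ?_⟩
    rw [Ideal.mem_bot] at hz
    rw [TwoSidedIdeal.mem_bot, hz]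
  rw [hss] at this
  simpa using this

theorem exists_coatom {A : Type*} [NormedRing A] [NormedAlgebra ℂ A] [CompleteSpace A]
    (c : A) (hfin : (spectrum ℂ c).Finite) (α : ℂ) (hα : α ∈ spectrum ℂ c) :
    ∃ L : Submodule A A, IsCoatom L ∧ c - algebraMap ℂ A α ∈ L := by
  have hne : Ideal.span {c - algebraMap ℂ A α} ≠ (⊤ : Ideal A) := by
    rw [Ne, Ideal.eq_top_iff_one, Ideal.mem_span_singleton']
    rintro ⟨d, hd⟩
    have e1 : ∀ᶠ β in nhdsWithin α {α}ᶜ, β ∉ spectrum ℂ c := by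
      have h1 : ∀ᶠ β in nhds α, β ∉ spectrum ℂ c \ {α} :=
        (hfin.subset Set.sdiff_subset).isClosed.isOpen_compl.mem_nhds (by simp)
      filter_upwards [nhdsWithin_le_nhds h1, self_mem_nhdsWithin] with β h2 h3 h4
      exact h2 ⟨h4, h3⟩
    have e2 : ∀ᶠ β in nhdsWithin α {α}ᶜ, IsUnit (d * (c - algebraMap ℂ A β)) := by
      have h1 : ContinuousAt (fun β : ℂ => d * (c - algebraMap ℂ A β)) α := by
        have : Continuous (algebraMap ℂ A) := continuous_algebraMap ℂ A
        fun_prop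
      refine nhdsWithin_le_nhds (h1.eventually (Units.isOpen.mem_nhds ?_))
      simp [hd]
    obtain ⟨β, h1, h2⟩ := (e1.and e2).exists
    have h3 : IsUnit (c - algebraMap ℂ A β) := by
      rw [spectrum.notMem_iff] at h1
      rwa [← IsUnit.neg_iff, neg_sub]
    have h4 : IsUnit d := (IsUnit.mul_right_iff h3).1 h2
    apply spectrum.mem_iff.1 hα
    rw [← IsUnit.neg_iff, neg_sub]
    refine (IsUnit.mul_left_iff h4).1 ?_
    rw [hd]
    exact isUnit_one
  obtain ⟨L, hL, hle⟩ := Ideal.exists_le_maximal _ hne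
  exact ⟨L, hL.out, hle (Ideal.mem_span_singleton_self _)⟩

theorem main_aux {A : Type*} [NormedRing A] [NormedAlgebra ℂ A] [CompleteSpace A] [Nontrivial A]
    (hss : TwoSidedIdeal.jacobson (⊥ : TwoSidedIdeal A) = ⊥)
    (N : Set A) (hN : IsOpen N) (hNne : N.Nonempty)
    (a b : A)
    (h : ∀ x ∈ N, (spectrum ℂ (a * x)).Finite ∧ (spectrum ℂ (b * x)).Finite ∧
      spectrum ℂ (a * x) = spectrum ℂ (b * x)) :
    a = b := by
  obtain ⟨k, HA, HB, x, α, hinj, h0, hxa, hxb⟩ := rank_step a b N hN hNne h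
  have hfin : (spectrum ℂ (x * a)).Finite := by
    obtain ⟨S, -, hS⟩ := finset_of_not_manySpec _ _ (HA x)
    refine (S.finite_toSet.insert 0).subset ?_
    intro t ht
    by_cases ht0 : t = 0
    · exact Or.inl ht0
    · exact Or.inr (hS t ht ht0)
  choose L hL hmem using fun i => exists_coatom (x * a) hfin (α i) (hxa i)
  have : ∀ i, IsSimpleModule A (A ⧸ L i) := fun i => isSimpleModule_iff_isCoatom.2 (hL i)
  refine alg_final (sepSimple hss) k a b x α hinj h0 (fun i => A ⧸ L i)
    (fun i e v he hev => schur_quot (L i) (hL i) e v he hev)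
    (fun i => Submodule.Quotient.mk 1) ?_ ?_ HA HB hxb
  · intro i h1
    rw [Submodule.Quotient.mk_eq_zero] at h1
    exact (hL i).1 ((Ideal.eq_top_iff_one (L i)).2 h1)
  · intro i
    rw [← Submodule.Quotient.mk_smul, ← Submodule.Quotient.mk_smul, Submodule.Quotient.eq,
      smul_eq_mul, mul_one, ← Algebra.algebraMap_eq_smul_one]
    exact hmem i



theorem eq_of_spectrum_finite_and_equal_on_open
    {A : Type*} [NormedRing A] [NormOneClass A] [NormedAlgebra ℂ A] [CompleteSpace A]
    (hss : JacobsonSemisimple A) (N : Set A) (hN : IsOpen N) (hNne : N.Nonempty)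
    (a b : A)
    (h : ∀ x ∈ N, (spectrum ℂ (a * x)).Finite ∧ (spectrum ℂ (b * x)).Finite ∧
      spectrum ℂ (a * x) = spectrum ℂ (b * x)) :
    a = b := by
  have : Nontrivial A := NormOneClass.nontrivial
  exact main_aux hss N hN hNne a b h
end
end
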